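/- arXiv:math/0006037 — 4 statements merged into one kernel-verified Lean document; each statement's English description precedes it below -/
import Mathlib

section
/- Let K be an n×n Hermitian complex matrix with 0 ≤ K ≤ I (that is, both K and I − K are positive semidefinite), and let B be an n×n positive semidefinite Hermitian matrix. Then Tr(B K B K) is real and satisfies 0 ≤ Tr(B K B K) ≤ Tr(B² K). -/
/-!
The trace of a product of two positive semidefinite matrices is nonnegative
(`trace_mul_nonneg_of_posSemidef`). Both bounds follow, since `B * K * B` and `B * (1 - K) * B`
are positive semidefinite and `Tr(B²K) - Tr(BKBK) = Tr((B * (1 - K) * B) * K)`.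
-/

open Matrix
open scoped ComplexOrder

/-- Writing `Q = Cᴴ * C`, cyclicity turns `Tr(PQ)` into `Tr(C * P * Cᴴ)`, the trace of a positive
semidefinite matrix. In the order on `ℂ`, the conclusion includes that `Tr(PQ)` is real. -/
lemma trace_mul_nonneg_of_posSemidef {n : ℕ} {P Q : Matrix (Fin n) (Fin n) ℂ}
    (hP : P.PosSemidef) (hQ : Q.PosSemidef) : 0 ≤ (P * Q).trace := by
  obtain ⟨C, rfl⟩ : ∃ C : Matrix (Fin n) (Fin n) ℂ, Q = Cᴴ * C := by
    open scoped MatrixOrder in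
    exact CStarAlgebra.nonneg_iff_eq_star_mul_self.mp hQ.nonneg
  rw [← Matrix.mul_assoc, Matrix.trace_mul_comm, ← Matrix.mul_assoc]
  exact (hP.mul_mul_conjTranspose_same C).trace_nonneg

/-- If `K` is an `n×n` Hermitian matrix with `0 ≤ K ≤ I` and `B` is
positive semidefinite Hermitian, then `Tr(BKBK)` is real and `0 ≤ Tr(BKBK) ≤ Tr(B²K)`. -/
theorem stmt1 (n : ℕ) (K B : Matrix (Fin n) (Fin n) ℂ)
    (hK : K.PosSemidef) (hK1 : (1 - K).PosSemidef) (hB : B.PosSemidef) :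
    (B * K * B * K).trace.im = 0 ∧
    0 ≤ (B * K * B * K).trace.re ∧
    (B * K * B * K).trace.re ≤ (B * B * K).trace.re := by
  have hBKB : (B * K * B).PosSemidef := by
    simpa only [hB.isHermitian.eq] using hK.mul_mul_conjTranspose_same B
  have hBKB' : (B * (1 - K) * B).PosSemidef := by
    simpa only [hB.isHermitian.eq] using hK1.mul_mul_conjTranspose_same B
  have h1 := Complex.nonneg_iff.mp (trace_mul_nonneg_of_posSemidef hBKB hK)
  have h2 := Complex.nonneg_iff.mp (trace_mul_nonneg_of_posSemidef hBKB' hK)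
  have heq : B * (1 - K) * B * K = B * B * K - B * K * B * K := by noncomm_ring
  rw [heq, Matrix.trace_sub, Complex.sub_re] at h2
  exact ⟨h1.2.symm, h1.1, sub_nonneg.mp h2.1⟩
end

section
/- Let 0 < α < 1 and let φ : ℝ∖{0} → (0,∞) be measurable with lim_{λ→0} φ(aλ)/φ(λ) = 1 for every real a ≠ 0 (φ is slowly varying at the origin). Suppose the function m(λ) = |λ|^α φ(λ) is bounded on ℝ∖{0}. Then for every real-valued Schwartz function f on ℝ, lim_{L→∞} [ ∫_ℝ |f̂(k)|² m(k/L) dk ] / ( L^{−α} φ(1/L) ) = ∫_ℝ |f̂(k)|² |k|^α dk. -/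
/-!
After writing `m (k / L)` out, the quotient is the integral of
`|f̂(k)|² |k|^α φ(k/L) / φ(1/L)`, and slow variation makes the integrand converge pointwise to
`|f̂(k)|² |k|^α` for `k ≠ 0`. Everything rests on a dominating function, supplied by `ratio_bound`:
for large `L`, `|k|^α φ(k/L) / φ(1/L) ≤ C (1 + k²)`.

For `|k|/L` small this is Potter's bound `potter_bound` with exponent `α`, combined with
`φ(-t) ≤ 2 φ(t)` near the origin. For `|k|/L > δ` the boundedness of `m` controls the numerator,
and Potter's bound, comparing `φ(δ)` with `φ(1/L)`, keeps the denominator from being too small.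

Potter's bound is proved in the additive form, for `h(x) = log φ(e^{-x})`, whose increments
`h(x+u) - h(x)` tend to `0` for each `u`. Measurability of `h` upgrades this to a bound uniform in
`u ∈ [0,1]` (`uniform_increment`), and iterating unit steps gives a linear bound of arbitrarily
small slope (`linear_increment`).
-/

open MeasureTheory Filter Real
open scoped Topology FourierTransform

/-- A measurable form of the uniform convergence theorem for slowly varying functions. For large `x`
the set of `v ∈ [0,2]` with `|h(x+v) - h(x)| > 1/2` has measure below `1/4`. Given `u ∈ [0,1]`, the
exceptional sets based at `x` and at `x + u` cannot cover `[1,2]`, so some value `h(x+v)` is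
within `1/2` of both `h(x)` and `h(x+u)`. -/
theorem uniform_increment (h : ℝ → ℝ) (hmeas : Measurable h)
    (hlim : ∀ u : ℝ, Tendsto (fun x => h (x + u) - h x) atTop (𝓝 0)) :
    ∃ X : ℝ, ∀ x, X ≤ x → ∀ u, 0 ≤ u → u ≤ 1 → |h (x + u) - h x| ≤ 1 := by
  set B : ℝ → Set ℝ := fun x => {v | 1 / 2 < |h (x + v) - h x|} with hB
  have hBm : ∀ x, MeasurableSet (B x) := fun x =>
    measurableSet_lt measurable_const (by fun_prop)
  have hsmall : Tendsto (fun x => (volume.restrict (Set.Icc (0 : ℝ) 2)) (B x)) atTop (𝓝 0) := by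
    have := tendsto_measure_of_ae_tendsto_indicator_of_isFiniteMeasure
      (μ := volume.restrict (Set.Icc (0 : ℝ) 2)) atTop (A := ∅) MeasurableSet.empty (As := B) hBm
      (Eventually.of_forall fun v => by
        have h1 := (hlim v).abs
        rw [abs_zero] at h1
        filter_upwards [h1.eventually (gt_mem_nhds (show (0 : ℝ) < 1 / 2 by norm_num))] with x hx
        simp only [hB, Set.mem_ofPred_eq, Set.mem_empty_iff_false, iff_false, not_lt]
        exact hx.le)
    simpa using this
  obtain ⟨X, hX⟩ := eventually_atTop.1
    (hsmall.eventually (gt_mem_nhds (show (0 : ENNReal) < ENNReal.ofReal (1 / 4) by simp)))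
  refine ⟨X, fun x hx u hu0 hu1 => ?_⟩
  obtain ⟨v, hv1, hv2⟩ : ∃ v, v ∉ B x ∧ v - u ∉ B (x + u) := by
    by_contra! hcon
    have hsub : Set.Icc (1 : ℝ) 2 ⊆ (B x ∩ Set.Icc 0 2) ∪
        (fun v => v + (-u)) ⁻¹' (B (x + u) ∩ Set.Icc 0 2) := by
      intro v hv
      by_cases hvB : v ∈ B x
      · exact Or.inl ⟨hvB, by linarith [hv.1], hv.2⟩
      · refine Or.inr ⟨?_, ?_, ?_⟩
        · simpa [sub_eq_add_neg] using hcon v hvB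
        · linarith [hv.1]
        · linarith [hv.2]
    have h1 := hX x hx
    have h2 := hX (x + u) (by linarith)
    rw [Measure.restrict_apply (hBm _)] at h1 h2
    have h3 := (measure_mono (μ := volume) hsub).trans (measure_union_le _ _)
    rw [measure_preimage_add_right, Real.volume_Icc] at h3
    have h4 := h3.trans (add_le_add h1.le h2.le)
    rw [← ENNReal.ofReal_add (by norm_num) (by norm_num),
      ENNReal.ofReal_le_ofReal_iff (by norm_num)] at h4
    norm_num at h4
  simp only [hB, Set.mem_ofPred_eq, not_lt] at hv1 hv2
  rw [show x + u + (v - u) = x + v by ring] at hv2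
  rw [abs_le] at *
  constructor <;> linarith [hv1.1, hv1.2, hv2.1, hv2.2]

/-- Increments of `h` grow at most linearly with any prescribed slope `ε`: each of the `⌊y - x⌋` unit
steps costs at most `ε`, and the remaining fractional step at most `1`. -/
theorem linear_increment (h : ℝ → ℝ) (hmeas : Measurable h)
    (hlim : ∀ u : ℝ, Tendsto (fun x => h (x + u) - h x) atTop (𝓝 0)) {ε : ℝ} (hε : 0 < ε) :
    ∃ X : ℝ, ∀ x y, X ≤ x → x ≤ y → |h y - h x| ≤ 1 + ε * (y - x) := by
  obtain ⟨X₁, hX₁⟩ := uniform_increment h hmeas hlim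
  have h1 := (hlim 1).abs
  rw [abs_zero] at h1
  obtain ⟨X₂, hX₂⟩ := eventually_atTop.1 (h1.eventually (gt_mem_nhds hε))
  have step : ∀ n : ℕ, ∀ x, X₂ ≤ x → |h (x + n) - h x| ≤ ε * n := by
    intro n
    induction n with
    | zero => intro x _; simp
    | succ n ih =>
      intro x hx
      have a := ih x hx
      have b := hX₂ (x + n) (by have := n.cast_nonneg (α := ℝ); linarith)
      have e : h (x + (n + 1 : ℕ)) - h x = (h (x + n + 1) - h (x + n)) + (h (x + n) - h x) := by
        push_cast; rw [← add_assoc]; ring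
      rw [e]
      refine (abs_add_le _ _).trans ?_
      push_cast
      linarith
  refine ⟨max X₁ X₂, fun x y hx hxy => ?_⟩
  have hn : (⌊y - x⌋₊ : ℝ) ≤ y - x := Nat.floor_le (by linarith)
  have hn' : y - x < ⌊y - x⌋₊ + 1 := Nat.lt_floor_add_one _
  have hn0 : (0 : ℝ) ≤ ⌊y - x⌋₊ := Nat.cast_nonneg _
  set n : ℕ := ⌊y - x⌋₊
  have a := step n x ((le_max_right _ _).trans hx)
  have b := hX₁ (x + n) (by linarith [(le_max_left X₁ X₂).trans hx]) (y - x - n)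
    (by linarith) (by linarith)
  rw [show x + n + (y - x - n) = y by ring] at b
  rw [show h y - h x = (h y - h (x + n)) + (h (x + n) - h x) by ring]
  refine (abs_add_le _ _).trans (add_le_add b (a.trans ?_))
  gcongr

/-- Potter's bound on the positive half-line. The sum of the two powers replaces their maximum
`max(s/t, t/s)^ε`. -/
theorem potter_bound (φ : ℝ → ℝ) (hφ_meas : Measurable φ)
    (hφ_pos : ∀ lam : ℝ, lam ≠ 0 → 0 < φ lam)
    (hφ_slow : ∀ a : ℝ, a ≠ 0 →
      Tendsto (fun lam => φ (a * lam) / φ lam) (𝓝[≠] (0 : ℝ)) (𝓝 1)) {ε : ℝ} (hε : 0 < ε) :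
    ∃ δ : ℝ, 0 < δ ∧ ∀ s t, 0 < s → s ≤ δ → 0 < t → t ≤ δ →
      φ s ≤ exp 1 * ((s / t) ^ ε + (s / t) ^ (-ε)) * φ t := by
  have hexp : Tendsto (fun x : ℝ => exp (-x)) atTop (𝓝[≠] (0 : ℝ)) :=
    tendsto_nhdsWithin_iff.2 ⟨tendsto_exp_neg_atTop_nhds_zero,
      Eventually.of_forall fun x => (exp_pos _).ne'⟩
  obtain ⟨X, hX⟩ := linear_increment (fun x => log (φ (exp (-x)))) (by fun_prop)
    (fun u => by
      have := ((hφ_slow (exp (-u)) (exp_pos _).ne').comp hexp).log one_ne_zero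
      rw [log_one] at this
      refine this.congr fun x => ?_
      have e : exp (-(x + u)) = exp (-u) * exp (-x) := by rw [← exp_add]; congr 1; ring
      simp only [Function.comp]
      rw [e, log_div (hφ_pos _ (by positivity)).ne' (hφ_pos _ (exp_pos _).ne').ne']) hε
  refine ⟨exp (-X), exp_pos _, fun s t hs hsδ ht htδ => ?_⟩
  have key : log (φ s) - log (φ t) ≤ 1 + ε * |log s - log t| := by
    have ls : X ≤ -log s := by
      have := log_le_log hs hsδ; rw [log_exp] at this; linarith
    have lt : X ≤ -log t := by
      have := log_le_log ht htδ; rw [log_exp] at this; linarith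
    rcases le_total (log s) (log t) with hst | hst
    · have := hX _ _ lt (neg_le_neg hst)
      simp only [neg_neg, exp_log hs, exp_log ht] at this
      rw [abs_of_nonpos (by linarith)]
      linarith [(abs_le.1 this).2]
    · have := hX _ _ ls (neg_le_neg hst)
      simp only [neg_neg, exp_log hs, exp_log ht] at this
      rw [abs_of_nonneg (by linarith)]
      linarith [(abs_le.1 this).1]
  have hps := hφ_pos s hs.ne'
  have hpt := hφ_pos t ht.ne'
  have hst : 0 < s / t := by positivity
  have h1 : φ s ≤ exp 1 * exp (ε * |log (s / t)|) * φ t := by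
    rw [← exp_add, log_div hs.ne' ht.ne']
    calc φ s = exp (log (φ s) - log (φ t)) * φ t := by
          rw [exp_sub, exp_log hps, exp_log hpt]; field_simp
      _ ≤ _ := by gcongr
  refine h1.trans ?_
  gcongr
  rw [rpow_def_of_pos hst, rpow_def_of_pos hst]
  rcases abs_cases (log (s / t)) with ⟨e, _⟩ | ⟨e, _⟩ <;> rw [e]
  · rw [mul_comm ε]; linarith [exp_pos (log (s / t) * -ε)]
  · rw [show ε * -log (s / t) = log (s / t) * -ε by ring]; linarith [exp_pos (log (s / t) * ε)]

theorem rpow_sq_le {α : ℝ} (hα0 : 0 < α) (hα1 : α < 1) {x : ℝ} (hx : 0 ≤ x) :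
    x ^ α * x ^ α ≤ 1 + x ^ 2 := by
  have h : x ^ α ≤ max 1 x := by
    rcases le_total x 1 with h | h
    · exact (rpow_le_one hx h hα0.le).trans (le_max_left _ _)
    · exact (rpow_le_self_of_one_le h hα1.le).trans (le_max_right _ _)
  have h0 : 0 ≤ x ^ α := rpow_nonneg hx α
  calc x ^ α * x ^ α ≤ max 1 x * max 1 x := by gcongr
    _ ≤ 1 + x ^ 2 := by rcases max_cases 1 x with ⟨e, _⟩ | ⟨e, _⟩ <;> rw [e] <;> nlinarith

/-- The bound behind the dominated convergence argument, with `t` in the role of `1/L`. Taking the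
Potter exponent equal to `α` makes `|k|^α (|k|^α + |k|^{-α}) = |k|^{2α} + 1`, which is `O(1 + k²)`. -/
theorem ratio_bound {α : ℝ} (hα0 : 0 < α) (hα1 : α < 1)
    (φ : ℝ → ℝ) (hφ_meas : Measurable φ) (hφ_pos : ∀ lam : ℝ, lam ≠ 0 → 0 < φ lam)
    (hφ_slow : ∀ a : ℝ, a ≠ 0 →
      Tendsto (fun lam => φ (a * lam) / φ lam) (𝓝[≠] (0 : ℝ)) (𝓝 1))
    (M : ℝ) (hM : ∀ lam : ℝ, lam ≠ 0 → |lam| ^ α * φ lam ≤ M) :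
    ∃ C δ : ℝ, 0 < δ ∧ ∀ t k : ℝ, 0 < t → t ≤ δ → k ≠ 0 →
      |k| ^ α * (φ (k * t) / φ t) ≤ C * (1 + k ^ 2) := by
  obtain ⟨δ₁, hδ₁, hP⟩ := potter_bound φ hφ_meas hφ_pos hφ_slow hα0
  -- Reflection `a = -1` compares the two half-lines.
  obtain ⟨δ₂, hδ₂, hR⟩ := Metric.eventually_nhds_iff.1 (eventually_nhdsWithin_iff.1
    ((hφ_slow (-1) (by norm_num)).eventually (gt_mem_nhds (show (1 : ℝ) < 2 by norm_num))))
  obtain ⟨δ, hδ, hδa, hδb⟩ : ∃ δ : ℝ, 0 < δ ∧ δ ≤ δ₁ ∧ δ < δ₂ :=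
    ⟨min δ₁ (δ₂ / 2), by positivity, min_le_left _ _,
      (min_le_right _ _).trans_lt (by linarith)⟩
  have hrefl : ∀ lam : ℝ, lam ≠ 0 → |lam| ≤ δ → φ lam ≤ 2 * φ |lam| := by
    intro lam h0 hlam
    have hp := hφ_pos _ (abs_pos.2 h0).ne'
    rcases abs_choice lam with e | e
    · rw [e] at hp ⊢; linarith
    · have := hR (y := |lam|) (by simpa using hlam.trans_lt hδb) (abs_pos.2 h0).ne'
      rw [div_lt_iff₀ hp] at this
      rw [show -1 * |lam| = lam by rw [e]; ring] at this
      exact this.le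
  have hM0 : 0 ≤ M := by
    have := hM 1 one_ne_zero
    simp only [abs_one, one_rpow, one_mul] at this
    exact (hφ_pos 1 one_ne_zero).le.trans this
  have hφδ := hφ_pos δ hδ.ne'
  set C₁ : ℝ := 4 * exp 1 with hC₁
  set C₂ : ℝ := 2 * exp 1 * M / (δ ^ α * φ δ) with hC₂
  have hC₁0 : 0 ≤ C₁ := by positivity
  have hC₂0 : 0 ≤ C₂ := by positivity
  refine ⟨C₁ + C₂, δ, hδ, fun t k ht htδ hk => ?_⟩
  have hk' : 0 < |k| := abs_pos.2 hk
  have hkt : k * t ≠ 0 := mul_ne_zero hk ht.ne'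
  have habs : |k * t| = |k| * t := by rw [abs_mul, abs_of_pos ht]
  have hpt := hφ_pos t ht.ne'
  have hsq := rpow_sq_le hα0 hα1 hk'.le
  rw [sq_abs] at hsq
  have h1k : 0 ≤ k ^ 2 := sq_nonneg k
  rcases le_or_gt (|k| * t) δ with hle | hgt
  -- `k * t` lies in the range of Potter's bound, which compares `φ (|k| * t)` with `φ t`.
  · have h1 := hrefl (k * t) hkt (by rwa [habs])
    rw [habs] at h1
    have h2 := hP (|k| * t) t (by positivity) (hle.trans hδa) ht (htδ.trans hδa)
    rw [mul_div_cancel_right₀ _ ht.ne'] at h2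
    have h3 : φ (k * t) / φ t ≤ 2 * (exp 1 * (|k| ^ α + |k| ^ (-α))) := by
      rw [div_le_iff₀ hpt]; linarith
    have hinv : |k| ^ α * |k| ^ (-α) = 1 := by
      rw [← rpow_add hk', add_neg_cancel, rpow_zero]
    calc |k| ^ α * (φ (k * t) / φ t)
        ≤ |k| ^ α * (2 * (exp 1 * (|k| ^ α + |k| ^ (-α)))) := by gcongr
      _ = 2 * exp 1 * (|k| ^ α * |k| ^ α + |k| ^ α * |k| ^ (-α)) := by ring
      _ ≤ 2 * exp 1 * ((1 + k ^ 2) + (1 + k ^ 2)) := by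
          rw [hinv]; gcongr; linarith
      _ = C₁ * (1 + k ^ 2) := by rw [hC₁]; ring
      _ ≤ _ := by gcongr; linarith
  -- Here `δ / t < |k|`; the numerator is controlled by `M`, and `φ t` from below through `φ δ`.
  · have h1 := hM (k * t) hkt
    rw [habs, mul_rpow hk'.le ht.le] at h1
    have h2 := hP δ t hδ hδa ht (htδ.trans hδa)
    have hone : 1 ≤ δ / t := (one_le_div ht).2 htδ
    have hPpos : 0 < (δ / t) ^ α := by positivity
    have hPk : (δ / t) ^ α ≤ |k| ^ α := by
      gcongr; rw [div_le_iff₀ ht]; exact hgt.le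
    have h3 : φ δ ≤ 2 * exp 1 * (δ / t) ^ α * φ t := by
      have : (δ / t) ^ (-α) ≤ (δ / t) ^ α := rpow_le_rpow_of_exponent_le hone (by linarith)
      refine h2.trans ?_
      calc _ ≤ exp 1 * ((δ / t) ^ α + (δ / t) ^ α) * φ t := by gcongr
        _ = _ := by ring
    have hδt : δ ^ α = (δ / t) ^ α * t ^ α := by
      rw [← mul_rpow (by positivity) ht.le, div_mul_cancel₀ _ ht.ne']
    have h4 : |k| ^ α * φ (k * t) * δ ^ α ≤ M * (δ / t) ^ α := by
      rw [hδt]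
      calc _ = (|k| ^ α * t ^ α * φ (k * t)) * (δ / t) ^ α := by ring
        _ ≤ _ := by gcongr
    have h5 : |k| ^ α * (φ (k * t) / φ t) ≤ C₂ * ((δ / t) ^ α * (δ / t) ^ α) := by
      have hδα : 0 < δ ^ α := by positivity
      rw [hC₂, ← mul_div_assoc, div_mul_eq_mul_div, div_le_div_iff₀ hpt (by positivity)]
      calc |k| ^ α * φ (k * t) * (δ ^ α * φ δ) = (|k| ^ α * φ (k * t) * δ ^ α) * φ δ := by ring
        _ ≤ (M * (δ / t) ^ α) * (2 * exp 1 * (δ / t) ^ α * φ t) := by gcongr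
        _ = _ := by ring
    calc _ ≤ _ := h5
      _ ≤ C₂ * (|k| ^ α * |k| ^ α) := by gcongr
      _ ≤ C₂ * (1 + k ^ 2) := by gcongr
      _ ≤ _ := by gcongr; linarith

theorem integrable_schwartz_sq_mul (g : SchwartzMap ℝ ℂ) :
    Integrable (fun k : ℝ => ‖g k‖ ^ 2 * (1 + k ^ 2)) := by
  have h0 := g.integrable_pow_mul volume 0
  have h2 := g.integrable_pow_mul volume 2
  refine ((h0.add h2).const_mul (SchwartzMap.seminorm ℝ 0 0 g)).mono'
    (by have := g.continuous; exact (by fun_prop : Continuous _).aestronglyMeasurable)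
    (Eventually.of_forall fun k => ?_)
  have hb := SchwartzMap.norm_le_seminorm ℝ g k
  rw [Real.norm_of_nonneg (by positivity)]
  simp only [Pi.add_apply, pow_zero, one_mul, Real.norm_eq_abs, sq_abs]
  calc ‖g k‖ ^ 2 * (1 + k ^ 2) = ‖g k‖ * (‖g k‖ + k ^ 2 * ‖g k‖) := by ring
    _ ≤ _ := by gcongr

/-- If `0 < α < 1`, `φ` is positive, measurable and slowly varying at the
origin, and `m(λ) = |λ|^α φ(λ)` is bounded, then for every real-valued Schwartz function `f`,
`(∫ |f̂(k)|² m(k/L) dk) / (L^{-α} φ(1/L)) → ∫ |f̂(k)|² |k|^α dk` as `L → ∞`. -/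
theorem stmt8 (α : ℝ) (hα0 : 0 < α) (hα1 : α < 1)
    (φ : ℝ → ℝ) (hφ_meas : Measurable φ) (hφ_pos : ∀ lam : ℝ, lam ≠ 0 → 0 < φ lam)
    (hφ_slow : ∀ a : ℝ, a ≠ 0 →
      Tendsto (fun lam => φ (a * lam) / φ lam) (𝓝[≠] (0 : ℝ)) (𝓝 1))
    (m : ℝ → ℝ) (hm : ∀ lam : ℝ, lam ≠ 0 → m lam = |lam| ^ α * φ lam)
    (M : ℝ) (hM : ∀ lam : ℝ, lam ≠ 0 → m lam ≤ M)
    (f : SchwartzMap ℝ ℝ) :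
    Tendsto (fun L : ℝ =>
        (∫ k, ‖𝓕 (fun x => (f x : ℂ)) k‖ ^ 2 * m (k / L)) / (L ^ (-α) * φ (1 / L)))
      atTop (𝓝 (∫ k, ‖𝓕 (fun x => (f x : ℂ)) k‖ ^ 2 * |k| ^ α)) := by
  obtain ⟨C, δ, hδ, hC⟩ := ratio_bound hα0 hα1 φ hφ_meas hφ_pos hφ_slow M
    (fun lam h => hm lam h ▸ hM lam h)
  obtain ⟨g, hg⟩ : ∃ g : SchwartzMap ℝ ℂ, 𝓕 (fun x => (f x : ℂ)) = g :=
    ⟨𝓕 (f.postcompCLM Complex.ofRealCLM), rfl⟩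
  rw [hg]
  -- The values of `m` and `φ` at `0` are arbitrary; only `k ≠ 0` matters for the integrals.
  have hne : ∀ᵐ k : ℝ, k ≠ 0 := Measure.ae_ne volume 0
  have hinv : Tendsto (fun L : ℝ => L⁻¹) atTop (𝓝[≠] (0 : ℝ)) :=
    tendsto_inv_atTop_nhdsGT_zero.mono_right (nhdsWithin_mono _ fun x hx => ne_of_gt hx)
  have hlim : Tendsto
      (fun L : ℝ => ∫ k, ‖g k‖ ^ 2 * (|k| ^ α * (φ (k * L⁻¹) / φ L⁻¹))) atTop
      (𝓝 (∫ k, ‖g k‖ ^ 2 * |k| ^ α)) := by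
    refine tendsto_integral_filter_of_dominated_convergence
      (fun k => C * (‖g k‖ ^ 2 * (1 + k ^ 2))) (Eventually.of_forall fun L => ?_) ?_
      ((integrable_schwartz_sq_mul g).const_mul C) ?_
    · have := g.continuous.measurable
      exact (by fun_prop : Measurable _).aestronglyMeasurable
    · filter_upwards [eventually_ge_atTop δ⁻¹] with L hL
      filter_upwards [hne] with k hk
      have hL0 : 0 < L := (inv_pos.2 hδ).trans_le hL
      have h1 := hC L⁻¹ k (inv_pos.2 hL0) (inv_le_of_inv_le₀ hδ hL) hk
      have p1 := hφ_pos (k * L⁻¹) (mul_ne_zero hk (inv_pos.2 hL0).ne')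
      have p2 := hφ_pos L⁻¹ (inv_pos.2 hL0).ne'
      rw [Real.norm_of_nonneg (by positivity)]
      calc _ ≤ ‖g k‖ ^ 2 * (C * (1 + k ^ 2)) := by gcongr
        _ = _ := by ring
    · filter_upwards [hne] with k hk
      have := (((hφ_slow k hk).comp hinv).const_mul (|k| ^ α)).const_mul (‖g k‖ ^ 2)
      simpa only [mul_one, Function.comp_def] using this
  refine hlim.congr' ?_
  filter_upwards [eventually_gt_atTop 0] with L hL
  rw [← integral_div]
  refine integral_congr_ae ?_
  filter_upwards [hne] with k hk
  have p2 := hφ_pos L⁻¹ (inv_pos.2 hL).ne'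
  have hLα : 0 < L ^ (-α) := rpow_pos_of_pos hL _
  rw [hm _ (div_ne_zero hk hL.ne'), one_div, div_eq_mul_inv k L, abs_mul,
    abs_of_pos (inv_pos.2 hL), mul_rpow (abs_nonneg k) (inv_pos.2 hL).le, inv_rpow hL.le,
    ← rpow_neg hL.le]
  field_simp
end

section
/- Let β > 1 and let B = ⋃_{n=1}^∞ [n, n + n^{−β}] ⊂ ℝ. For λ > 0 let m(λ) denote the Lebesgue measure of B ∖ (B + λ), where B + λ = {x + λ : x ∈ B}. Then lim_{λ→0+} m(λ) / λ^{1 − 1/β} = β/(β−1). -/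
open MeasureTheory Set Filter Real
open scoped Topology

/-!
Near each integer `n ≠ 2` the set `B ∖ (B + λ)` is, up to endpoints, an interval of length
`min(λ, n^{-β})`, and near `n = 2` it is contained in such an interval (there `[1, 2]` and
`[2, 2 + 2^{-β}]` touch, so the shift of the former covers part of the latter).
Hence `m(λ)` differs from `∑_{n ≥ 1} min(λ, n^{-β})` by at most `2λ` once `λ < 1/2`
(`volume_le`, `le_volume`).

With `a = λ^{-1/β}`, the summand is the value at `n` of the bounded antitone function
`profile β a x = (max x a)^{-β}`, so the sum differs by at most `λ` from
`∫_0^∞ profile = a^{1-β} + a^{1-β}/(β-1) = β/(β-1) · λ^{1-1/β}` (`profile_tsum_bounds`).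
Altogether `|m(λ) - β/(β-1) · λ^{1-1/β}| ≤ 3λ`, and `λ = o(λ^{1-1/β})` as `λ → 0⁺`.
-/

/-- For `x > 0` and `a = λ^{-1/β}` this is `min(λ, x^{-β})`; truncating the argument rather than
the value makes it continuous and antitone on all of `ℝ`. -/
noncomputable def profile (β a x : ℝ) : ℝ := (max x a) ^ (-β)

lemma profile_nonneg {β a x : ℝ} (ha : 0 < a) : 0 ≤ profile β a x :=
  Real.rpow_nonneg (le_max_of_le_right ha.le) _

lemma profile_le {β a x : ℝ} (hβ : 1 < β) (ha : 0 < a) : profile β a x ≤ a ^ (-β) :=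
  Real.rpow_le_rpow_of_nonpos ha (le_max_right _ _) (by linarith)

lemma profile_le_rpow {β a x : ℝ} (hβ : 1 < β) (hx : 0 < x) :
    profile β a x ≤ x ^ (-β) :=
  Real.rpow_le_rpow_of_nonpos hx (le_max_left _ _) (by linarith)

lemma profile_eq_or (β a x : ℝ) : profile β a x = x ^ (-β) ∨ profile β a x = a ^ (-β) := by
  unfold profile
  rcases max_choice x a with h | h <;> simp [h]

lemma profile_antitone {β a : ℝ} (hβ : 1 < β) (ha : 0 < a) : Antitone (profile β a) := by
  intro x y hxy
  exact Real.rpow_le_rpow_of_nonpos (lt_max_of_lt_right ha) (max_le_max_right a hxy) (by linarith)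

lemma integral_profile {β a N : ℝ} (hβ : 1 < β) (ha : 0 < a) (hN : a ≤ N) :
    ∫ x in (0 : ℝ)..N, profile β a x
      = β / (β - 1) * a ^ (1 - β) - N ^ (1 - β) / (β - 1) := by
  have hint : ∀ u v, IntervalIntegrable (profile β a) volume u v :=
    fun u v => (profile_antitone hβ ha).intervalIntegrable
  rw [← intervalIntegral.integral_add_adjacent_intervals (hint 0 a) (hint a N)]
  have h1 : ∫ x in (0 : ℝ)..a, profile β a x = a ^ (1 - β) := by
    have : ∫ x in (0 : ℝ)..a, profile β a x = ∫ x in (0 : ℝ)..a, a ^ (-β) := by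
      apply intervalIntegral.integral_congr
      intro x hx
      rw [uIcc_of_le ha.le] at hx
      simp [profile, max_eq_right hx.2]
    rw [this, intervalIntegral.integral_const, smul_eq_mul, sub_zero, sub_eq_add_neg,
      Real.rpow_add ha, Real.rpow_one]
  have h2 : ∫ x in a..N, profile β a x = (N ^ (1 - β) - a ^ (1 - β)) / (1 - β) := by
    have : ∫ x in a..N, profile β a x = ∫ x in a..N, x ^ (-β) := by
      apply intervalIntegral.integral_congr
      intro x hx
      rw [uIcc_of_le hN] at hx
      simp [profile, max_eq_left hx.1]
    rw [this, integral_rpow]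
    · rw [show -β + 1 = 1 - β by ring]
    · right
      refine ⟨by linarith, ?_⟩
      rw [uIcc_of_le hN]
      intro h
      linarith [h.1]
  rw [h1, h2]
  have : β - 1 ≠ 0 := by linarith
  have : 1 - β ≠ 0 := by linarith
  field_simp
  ring

/-- Integral comparison for the antitone function `profile β a`, whose maximum is `a ^ (-β)`. -/
lemma profile_tsum_bounds {β a : ℝ} (hβ : 1 < β) (ha : 0 < a) :
    Summable (fun i : ℕ => profile β a (i + 1)) ∧
    ∑' i : ℕ, profile β a (i + 1) ≤ β / (β - 1) * a ^ (1 - β) ∧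
    β / (β - 1) * a ^ (1 - β) - a ^ (-β) ≤ ∑' i : ℕ, profile β a (i + 1) := by
  have hanti := profile_antitone hβ ha
  have hb : 0 < β - 1 := by linarith
  have hub : ∀ N : ℕ, ∑ i ∈ Finset.range N, profile β a (i + 1)
      ≤ ∫ x in (0 : ℝ)..N, profile β a x := by
    intro N
    have := AntitoneOn.sum_le_integral (x₀ := 0) (a := N) (hanti.antitoneOn _)
    simpa using this
  have hlb : ∀ N : ℕ, ∫ x in (0 : ℝ)..N, profile β a x
      ≤ a ^ (-β) + ∑ i ∈ Finset.range N, profile β a (i + 1) := by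
    intro N
    have := AntitoneOn.integral_le_sum (x₀ := 0) (a := N) (hanti.antitoneOn _)
    simp only [zero_add] at this
    have h2 := Finset.sum_range_succ (fun i : ℕ => profile β a i) N
    rw [Finset.sum_range_succ'] at h2
    push_cast at h2
    linarith [profile_le (x := 0) hβ ha, profile_nonneg (β := β) (x := N) ha]
  have hnn : ∀ i : ℕ, 0 ≤ profile β a (i + 1) := fun i => profile_nonneg ha
  have hbd : ∀ N : ℕ, ∑ i ∈ Finset.range N, profile β a (i + 1)
      ≤ β / (β - 1) * a ^ (1 - β) := by
    intro N
    obtain ⟨M, hM⟩ := exists_nat_ge a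
    have h1 : ∑ i ∈ Finset.range N, profile β a (i + 1)
        ≤ ∑ i ∈ Finset.range (max N M), profile β a (i + 1) :=
      Finset.sum_le_sum_of_subset_of_nonneg
        (Finset.range_subset_range.2 (le_max_left _ _)) (fun i _ _ => hnn i)
    have h2 := hub (max N M)
    rw [integral_profile hβ ha (hM.trans (by exact_mod_cast le_max_right _ _))] at h2
    have h3 : 0 ≤ ((max N M : ℕ) : ℝ) ^ (1 - β) / (β - 1) := by positivity
    linarith
  have hs : Summable (fun i : ℕ => profile β a (i + 1)) :=
    summable_of_sum_range_le hnn hbd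
  refine ⟨hs, Real.tsum_le_of_sum_range_le hnn hbd, ?_⟩
  have hlim : Tendsto (fun N : ℕ => β / (β - 1) * a ^ (1 - β)
      - (N : ℝ) ^ (1 - β) / (β - 1) - a ^ (-β)) atTop
      (𝓝 (β / (β - 1) * a ^ (1 - β) - 0 / (β - 1) - a ^ (-β))) := by
    have h0 : Tendsto (fun N : ℕ => (N : ℝ) ^ (1 - β)) atTop (𝓝 0) := by
      have := (tendsto_rpow_neg_atTop hb).comp tendsto_natCast_atTop_atTop
      rw [neg_sub] at this
      exact this
    exact (tendsto_const_nhds.sub (h0.div_const _)).sub tendsto_const_nhds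
  rw [zero_div, sub_zero] at hlim
  refine le_of_tendsto hlim ?_
  obtain ⟨M, hM⟩ := exists_nat_ge a
  filter_upwards [eventually_ge_atTop M] with N hN
  have h1 := hlb N
  rw [integral_profile hβ ha (hM.trans (by exact_mod_cast hN))] at h1
  have h2 := hs.sum_le_tsum (Finset.range N) (fun i _ => hnn i)
  linarith

/-- The set `⋃_{n ≥ 1} [n, n + n^{-β}]`. -/
def bandSet (β : ℝ) : Set ℝ :=
  ⋃ n : ℕ, ⋃ _ : 1 ≤ n, Set.Icc (n : ℝ) ((n : ℝ) + (n : ℝ) ^ (-β))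

lemma mem_bandSet {β x : ℝ} :
    x ∈ bandSet β ↔ ∃ n : ℕ, 1 ≤ n ∧ (n : ℝ) ≤ x ∧ x ≤ (n : ℝ) + (n : ℝ) ^ (-β) := by
  simp only [bandSet, mem_iUnion, mem_Icc, exists_prop]

lemma volume_le {β a : ℝ} (hβ : 1 < β) (ha : 0 < a) :
    volume (bandSet β \ ((fun x => x + a ^ (-β)) '' bandSet β))
      ≤ ENNReal.ofReal (β / (β - 1) * a ^ (1 - β)) := by
  obtain ⟨hs, h1, -⟩ := profile_tsum_bounds hβ ha
  have hsub : bandSet β \ ((fun x => x + a ^ (-β)) '' bandSet β)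
      ⊆ ⋃ i : ℕ, Icc ((i : ℝ) + 1) ((i : ℝ) + 1 + profile β a (i + 1)) := by
    rintro x ⟨hx, hx'⟩
    obtain ⟨n, hn, hnx, hxn⟩ := mem_bandSet.1 hx
    obtain ⟨i, rfl⟩ := Nat.exists_eq_add_of_le' hn
    push_cast at hnx hxn
    refine mem_iUnion.2 ⟨i, hnx, ?_⟩
    rcases profile_eq_or β a (i + 1) with h | h
    · rw [h]; exact hxn
    · rw [h]
      by_contra! hlt
      refine hx' ⟨x - a ^ (-β), mem_bandSet.2 ⟨i + 1, hn, ?_, ?_⟩, by simp⟩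
      · push_cast; linarith
      · push_cast; linarith [Real.rpow_pos_of_pos ha (-β)]
  calc volume (bandSet β \ ((fun x => x + a ^ (-β)) '' bandSet β))
      ≤ ∑' i : ℕ, volume (Icc ((i : ℝ) + 1) ((i : ℝ) + 1 + profile β a (i + 1))) :=
        (measure_mono hsub).trans (measure_iUnion_le _)
    _ = ∑' i : ℕ, ENNReal.ofReal (profile β a (i + 1)) := by simp [Real.volume_Icc]
    _ = ENNReal.ofReal (∑' i : ℕ, profile β a (i + 1)) :=
        (ENNReal.ofReal_tsum_of_nonneg (fun i => profile_nonneg ha) hs).symm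
    _ ≤ _ := ENNReal.ofReal_le_ofReal h1

/-- For `n ≥ 3` the interval of `B` at `n - 1`, shifted by less than `1/2`, stays to the left of
`n`, so `[n, n + min(λ, n^{-β}))` lies in `B ∖ (B + λ)`. Dropping `n = 1, 2` costs at most `2λ`. -/
lemma le_volume {β a : ℝ} (hβ : 1 < β) (ha : 0 < a) (hlam : a ^ (-β) < 1 / 2) :
    ENNReal.ofReal (β / (β - 1) * a ^ (1 - β) - 3 * a ^ (-β))
      ≤ volume (bandSet β \ ((fun x => x + a ^ (-β)) '' bandSet β)) := by
  obtain ⟨hs, -, h1⟩ := profile_tsum_bounds hβ ha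
  have hsub : (⋃ i : ℕ, Ico ((i : ℝ) + 3) ((i : ℝ) + 3 + profile β a (i + 3)))
      ⊆ bandSet β \ ((fun x => x + a ^ (-β)) '' bandSet β) := by
    intro x hx
    obtain ⟨i, hix, hxi⟩ := mem_iUnion.1 hx
    have hp1 := profile_le (x := (i : ℝ) + 3) hβ ha
    have hp2 := profile_le_rpow (a := a) (x := (i : ℝ) + 3) hβ (by positivity)
    refine ⟨mem_bandSet.2 ⟨i + 3, by omega, by push_cast; exact hix, by push_cast; linarith⟩, ?_⟩
    rintro ⟨y, hy, rfl⟩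
    obtain ⟨k, hk, hky, hyk⟩ := mem_bandSet.1 hy
    simp only at hix hxi
    have hk1 : (1 : ℝ) ≤ k := by exact_mod_cast hk
    have hkpow : (k : ℝ) ^ (-β) ≤ (k : ℝ)⁻¹ := by
      rw [← Real.rpow_neg_one]
      exact Real.rpow_le_rpow_of_exponent_le hk1 (by linarith)
    have hki : k ≤ i + 2 := by
      have : (k : ℝ) < ((i + 3 : ℕ) : ℝ) := by push_cast; linarith
      have := Nat.cast_lt.1 this
      omega
    have hki' : (k : ℝ) ≤ i + 2 := by exact_mod_cast hki
    rcases Nat.lt_or_ge k 2 with h | h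
    · obtain rfl : k = 1 := by omega
      norm_num at hyk
      have : (0 : ℝ) ≤ i := by positivity
      linarith
    · have h2 : (k : ℝ)⁻¹ ≤ 2⁻¹ := inv_anti₀ (by norm_num) (by exact_mod_cast h)
      norm_num at h2
      linarith
  have hdisj : Pairwise (Function.onFun Disjoint
      (fun i : ℕ => Ico ((i : ℝ) + 3) ((i : ℝ) + 3 + profile β a (i + 3)))) := by
    have key : ∀ i j : ℕ, i < j → Disjoint
        (Ico ((i : ℝ) + 3) ((i : ℝ) + 3 + profile β a (i + 3)))
        (Ico ((j : ℝ) + 3) ((j : ℝ) + 3 + profile β a (j + 3))) := by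
      intro i j hij
      rw [Set.disjoint_left]
      rintro x ⟨-, hx⟩ ⟨hx', -⟩
      have : (i : ℝ) + 1 ≤ j := by exact_mod_cast hij
      linarith [profile_le (x := (i : ℝ) + 3) hβ ha]
    intro i j hij
    rcases lt_or_gt_of_ne hij with h | h
    · exact key i j h
    · exact (key j i h).symm
  have hshift := hs.sum_add_tsum_nat_add 2
  have heq : ∀ i : ℕ, profile β a (((i + 2 : ℕ) : ℝ) + 1) = profile β a (i + 3) := by
    intro i; congr 1; push_cast; ring
  have hs' : Summable (fun i : ℕ => profile β a (i + 3)) := by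
    have := (summable_nat_add_iff 2).2 hs
    simpa only [heq] using this
  simp only [heq, Finset.sum_range_succ, Finset.sum_range_zero, zero_add] at hshift
  calc ENNReal.ofReal (β / (β - 1) * a ^ (1 - β) - 3 * a ^ (-β))
      ≤ ENNReal.ofReal (∑' i : ℕ, profile β a (i + 3)) := by
        apply ENNReal.ofReal_le_ofReal
        linarith [profile_le (x := ((0 : ℕ) : ℝ) + 1) hβ ha,
          profile_le (x := ((1 : ℕ) : ℝ) + 1) hβ ha]
    _ = ∑' i : ℕ, ENNReal.ofReal (profile β a (i + 3)) :=
        ENNReal.ofReal_tsum_of_nonneg (fun i => profile_nonneg ha) hs'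
    _ = ∑' i : ℕ, volume (Ico ((i : ℝ) + 3) ((i : ℝ) + 3 + profile β a (i + 3))) := by
        simp [Real.volume_Ico]
    _ = volume (⋃ i : ℕ, Ico ((i : ℝ) + 3) ((i : ℝ) + 3 + profile β a (i + 3))) :=
        (measure_iUnion hdisj (fun i => measurableSet_Ico)).symm
    _ ≤ _ := measure_mono hsub

/-- For `β > 1` and `B = ⋃_{n≥1} [n, n + n^{-β}]`, the Lebesgue measure
`m(λ)` of `B ∖ (B + λ)` satisfies `m(λ)/λ^{1-1/β} → β/(β-1)` as `λ → 0⁺`. -/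
theorem stmt12 (β : ℝ) (hβ : 1 < β) :
    Tendsto (fun lam : ℝ =>
        (volume ((⋃ n : ℕ, ⋃ _ : 1 ≤ n, Set.Icc (n : ℝ) ((n : ℝ) + (n : ℝ) ^ (-β))) \
          ((fun x => x + lam) ''
            (⋃ n : ℕ, ⋃ _ : 1 ≤ n, Set.Icc (n : ℝ) ((n : ℝ) + (n : ℝ) ^ (-β)))))).toReal
          / lam ^ (1 - 1 / β))
      (𝓝[>] (0 : ℝ)) (𝓝 (β / (β - 1))) := by
  change Tendsto (fun lam : ℝ =>
    (volume (bandSet β \ ((fun x => x + lam) '' bandSet β))).toReal / lam ^ (1 - 1 / β)) _ _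
  have hβ0 : 0 < β := by linarith
  have hC : 0 ≤ β / (β - 1) := div_nonneg hβ0.le (by linarith)
  have hlow : Tendsto (fun lam : ℝ => β / (β - 1) - 3 * lam ^ (1 / β)) (𝓝[>] (0 : ℝ))
      (𝓝 (β / (β - 1))) := by
    have h : ContinuousAt (fun lam : ℝ => β / (β - 1) - 3 * lam ^ (1 / β)) 0 :=
      continuousAt_const.sub (continuousAt_const.mul
        (Real.continuousAt_rpow_const _ _ (Or.inr (by positivity))))
    have h' := h.tendsto.mono_left (nhdsWithin_le_nhds (s := Ioi 0))
    rwa [Real.zero_rpow (by positivity), mul_zero, sub_zero] at h'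
  have hbounds : ∀ᶠ lam : ℝ in 𝓝[>] (0 : ℝ),
      (β / (β - 1) - 3 * lam ^ (1 / β) ≤
        (volume (bandSet β \ ((fun x => x + lam) '' bandSet β))).toReal / lam ^ (1 - 1 / β)) ∧
      (volume (bandSet β \ ((fun x => x + lam) '' bandSet β))).toReal / lam ^ (1 - 1 / β)
        ≤ β / (β - 1) := by
    filter_upwards [Ioo_mem_nhdsGT (show (0 : ℝ) < 1 / 2 by norm_num)] with lam hlam
    obtain ⟨h0, h2⟩ := hlam
    have ha : 0 < lam ^ (-(1 / β)) := Real.rpow_pos_of_pos h0 _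
    have e1 : (lam ^ (-(1 / β))) ^ (-β) = lam := by
      rw [← Real.rpow_mul h0.le, show -(1 / β) * -β = 1 by field_simp, Real.rpow_one]
    have e2 : (lam ^ (-(1 / β))) ^ (1 - β) = lam ^ (1 - 1 / β) := by
      rw [← Real.rpow_mul h0.le]
      congr 1
      field_simp
      ring
    have e3 : lam ^ (1 / β) * lam ^ (1 - 1 / β) = lam := by
      rw [← Real.rpow_add h0, show 1 / β + (1 - 1 / β) = 1 by ring, Real.rpow_one]
    have hup := volume_le hβ ha
    have hlo := le_volume hβ ha (by rw [e1]; exact h2)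
    rw [e1, e2] at hup hlo
    have hpos : 0 < lam ^ (1 - 1 / β) := Real.rpow_pos_of_pos h0 _
    constructor
    · rw [le_div_iff₀ hpos, sub_mul, mul_assoc 3, e3]
      exact (ENNReal.ofReal_le_iff_le_toReal (ne_top_of_le_ne_top ENNReal.ofReal_ne_top hup)).1 hlo
    · rw [div_le_iff₀ hpos]
      exact ENNReal.toReal_le_of_le_ofReal (by positivity) hup
  exact tendsto_of_tendsto_of_tendsto_of_le_of_le' hlow tendsto_const_nhds
    (hbounds.mono fun _ h => h.1) (hbounds.mono fun _ h => h.2)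
end

section
/- Let (η_j)_{j∈ℕ} be a sequence of real random variables such that for each j the moment generating function t ↦ E[e^{t η_j}] is finite for all t in some open neighborhood of 0, and define the n-th cumulant c_n(η_j) as the n-th derivative at t = 0 of t ↦ log E[e^{t η_j}]. Assume c₁(η_j) = 0 and c₂(η_j) = 1 for all j, and that there exists N < ∞ such that c_n(η_j) → 0 as j → ∞ for every n ≥ N. Then c_n(η_j) → 0 as j → ∞ for every n > 2, and η_j converges in distribution to the standard normal law N(0,1). -/
/-!
Moments and cumulants determine each other by a triangular polynomial recursion
(`MomentCumulant`), so convergence of all cumulants is equivalent to convergence of all moments.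

To show that the cumulants of index `> 2` tend to `0` it suffices to look along an ultrafilter.
There the cumulants of index below `N` are bounded (`cumSize_bounded`): otherwise, rescaling the
variables so that the cumulants have homogeneous size `1`, the variances tend to `0`; by
Cauchy–Schwarz all limiting moments vanish, hence so do all limiting cumulants, contradicting the
normalisation. So all cumulants converge along the ultrafilter, to a sequence with finitely many
nonzero terms, and the moments converge as well.

The limit moments then have `exp P` as exponential generating function, with `P` a polynomial.
Positivity of the Hankel forms of the limit moments gives `|exp P(x + iy)| ≤ exp P(x)`, that is
`Re P(x + iy) ≤ P(x)`, and looking at the leading term of `P` on suitable rays shows `deg P ≤ 2`;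
this is Marcinkiewicz's theorem (`marcinkiewicz`), proved for limits of moment sequences without
constructing a limiting random variable.

Consequently the cumulants, and hence the moments, converge to those of `N(0,1)`. The Taylor bound
`|e^{iy} - ∑_{k<n} (iy)^k/k!| ≤ |y|^n/n!` turns this into convergence of characteristic functions
(`charFun_tendsto`), and Lévy's continuity theorem gives convergence in distribution.
-/

open MeasureTheory ProbabilityTheory Filter
open scoped Topology

/-! ### Moments and cumulants as sequences -/

/-- `MomentCumulant c m`: the sequence `c` (read from index `1` on) is the sequence of cumulants
of the moment sequence `m`. As sequences this is the coefficient form of `deriv F = deriv G * F`, `F 0 = 1`,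
for the exponential generating functions `F` of `m` and `G` of `c`; it makes sense without any
convergence, so it survives limits taken term by term. -/
structure MomentCumulant (c m : ℕ → ℝ) : Prop where
  zero : m 0 = 1
  succ : ∀ n, m (n + 1) = ∑ k ∈ Finset.range (n + 1), (n.choose k : ℝ) * c (k + 1) * m (n - k)

/-- Leibniz's rule applied to the logarithmic-derivative equation `deriv f = deriv g * f`. -/
lemma iteratedDeriv_succ_of_deriv_eq_mul {𝕜 : Type*} [NontriviallyNormedField 𝕜] [CompleteSpace 𝕜] {f g : 𝕜 → 𝕜} (hf : AnalyticAt 𝕜 f 0)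
    (hg : AnalyticAt 𝕜 g 0) (h : deriv f =ᶠ[𝓝 0] fun z => deriv g z * f z) (n : ℕ) :
    iteratedDeriv (n + 1) f 0 = ∑ k ∈ Finset.range (n + 1),
      (n.choose k : 𝕜) * iteratedDeriv (k + 1) g 0 * iteratedDeriv (n - k) f 0 := by
  rw [iteratedDeriv_succ', h.iteratedDeriv_eq]
  have := iteratedDeriv_mul (n := n) (x := (0:𝕜)) (f := deriv g) (g := f) hg.deriv.contDiffAt hf.contDiffAt
  simp only [iteratedDeriv_succ']
  exact this

lemma momentCumulant_of_mgf {Ω : Type*} [MeasurableSpace Ω] (μ : Measure Ω) [IsProbabilityMeasure μ]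
    (X : Ω → ℝ) (h0 : 0 ∈ interior (integrableExpSet X μ)) :
    MomentCumulant (fun n => iteratedDeriv n (cgf X μ) 0) (fun n => ∫ ω, X ω ^ n ∂μ) := by
  refine ⟨by simp, fun n => ?_⟩
  have hm : ∀ n, ∫ ω, X ω ^ n ∂μ = iteratedDeriv n (mgf X μ) 0 := fun n => by
    rw [iteratedDeriv_mgf_zero h0]; rfl
  simp only [hm]
  refine iteratedDeriv_succ_of_deriv_eq_mul (analyticAt_mgf h0) (analyticAt_cgf h0) ?_ n
  filter_upwards [isOpen_interior.mem_nhds h0] with t ht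
  rw [deriv_cgf ht, deriv_mgf ht, div_mul_cancel₀]
  exact (mgf_pos (interior_subset (s := integrableExpSet X μ) ht)).ne'

lemma MomentCumulant.tendsto {ι : Type*} {l : Filter ι} {c m : ι → ℕ → ℝ} (h : ∀ j, MomentCumulant (c j) (m j)) {κ M : ℕ → ℝ}
    (hM : MomentCumulant κ M) (hc : ∀ n ≥ 1, Tendsto (fun j => c j n) l (𝓝 (κ n))) (n : ℕ) :
    Tendsto (fun j => m j n) l (𝓝 (M n)) := by
  induction n using Nat.strong_induction_on with
  | _ n ih =>
    cases n with
    | zero => simp only [hM.zero, (h _).zero]; exact tendsto_const_nhds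
    | succ n =>
      simp only [hM.succ, (h _).succ]
      exact tendsto_finsetSum _ fun k _ =>
        (tendsto_const_nhds.mul (hc _ (by omega))).mul (ih _ (by omega))

/-- The recursion expresses each moment as a polynomial in the cumulants, so convergence of all
cumulants forces convergence of all moments, and the recursion passes to the limit. -/
lemma MomentCumulant.exists_tendsto {ι : Type*} {l : Filter ι} [l.NeBot] {c m : ι → ℕ → ℝ}
    (h : ∀ j, MomentCumulant (c j) (m j)) {κ : ℕ → ℝ} (hc : ∀ n ≥ 1, Tendsto (fun j => c j n) l (𝓝 (κ n))) :
    ∃ M, MomentCumulant κ M ∧ ∀ n, Tendsto (fun j => m j n) l (𝓝 (M n)) := by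
  have key : ∀ n, ∃ L, Tendsto (fun j => m j n) l (𝓝 L) := by
    intro n
    induction n using Nat.strong_induction_on with
    | _ n ih =>
      cases n with
      | zero => exact ⟨1, by simp [(h _).zero]⟩
      | succ n =>
        choose! L hL using ih
        refine ⟨∑ k ∈ Finset.range (n + 1), (n.choose k : ℝ) * κ (k + 1) * L (n - k), ?_⟩
        simp only [(h _).succ]
        exact tendsto_finsetSum _ fun k _ =>
          (tendsto_const_nhds.mul (hc _ (by omega))).mul (hL _ (by omega))
  choose M hM using key
  refine ⟨M, ⟨?_, fun n => ?_⟩, hM⟩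
  · exact tendsto_nhds_unique (hM 0) (by simp [(h _).zero])
  · refine tendsto_nhds_unique (hM (n + 1)) ?_
    simp only [(h _).succ]
    exact tendsto_finsetSum _ fun k _ =>
      (tendsto_const_nhds.mul (hc _ (by omega))).mul (hM _)

/-- The effect of replacing a random variable `X` by `s * X`. -/
lemma MomentCumulant.scale {c m : ℕ → ℝ} (h : MomentCumulant c m) (s : ℝ) :
    MomentCumulant (fun n => s ^ n * c n) (fun n => s ^ n * m n) := by
  refine ⟨by simp [h.zero], fun n => ?_⟩
  simp only [h.succ, Finset.mul_sum]
  refine Finset.sum_congr rfl fun k hk => ?_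
  have : n + 1 = (k + 1) + (n - k) := by have := Finset.mem_range.1 hk; omega
  rw [this, pow_add]; ring

lemma MomentCumulant.eq_zero {κ M : ℕ → ℝ} (h : MomentCumulant κ M) (hM : ∀ n ≥ 1, M n = 0) : ∀ n ≥ 1, κ n = 0 := by
  intro n hn
  obtain ⟨n, rfl⟩ := Nat.exists_eq_add_of_le' hn
  have := h.succ n
  rw [hM _ hn, Finset.sum_range_succ, Finset.sum_eq_zero] at this
  · simpa [h.zero] using this.symm
  · intro k hk
    rw [hM _ (by have := Finset.mem_range.1 hk; omega), mul_zero]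

lemma MomentCumulant.one {κ M : ℕ → ℝ} (h : MomentCumulant κ M) : M 1 = κ 1 := by
  simpa [h.zero] using h.succ 0

lemma MomentCumulant.two {κ M : ℕ → ℝ} (h : MomentCumulant κ M) : M 2 = κ 1 ^ 2 + κ 2 := by
  have := h.succ 1
  simp [Finset.sum_range_succ, h.zero, h.one] at this
  rw [this]; ring

/-! ### Positivity of moment sequences -/

/-- The integral of `(a * X ^ p + b * X) ^ 2` is nonnegative. -/
lemma hankel_two {Ω : Type*} [MeasurableSpace Ω] (μ : Measure Ω) {X : Ω → ℝ}
    (hi : ∀ n, Integrable (fun ω => X ω ^ n) μ) (p : ℕ) (a b : ℝ) :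
    0 ≤ a ^ 2 * (∫ ω, X ω ^ (2 * p) ∂μ) + 2 * a * b * (∫ ω, X ω ^ (p + 1) ∂μ)
      + b ^ 2 * ∫ ω, X ω ^ 2 ∂μ := by
  have : 0 ≤ ∫ ω, (a * X ω ^ p + b * X ω) ^ 2 ∂μ := integral_nonneg fun ω => sq_nonneg _
  have e : ∀ ω, (a * X ω ^ p + b * X ω) ^ 2 =
      a ^ 2 * X ω ^ (2 * p) + 2 * a * b * X ω ^ (p + 1) + b ^ 2 * X ω ^ 2 := fun ω => by ring
  simp only [e] at this
  rw [integral_add (by exact ((hi _).const_mul _).add ((hi _).const_mul _)) ((hi _).const_mul _),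
    integral_add ((hi _).const_mul _) ((hi _).const_mul _)] at this
  simpa only [integral_const_mul] using this

open scoped Nat ComplexConjugate in
/-- The Hankel form of `m` evaluated at the degree `< K` Taylor polynomials of `exp (a * x)` and
`exp (b * x)`. If `m` is the moment sequence of `X`, it is the expectation of the product of these
polynomials at `X`, a truncation of `E[exp ((a + b) * X)]`. -/
noncomputable def expForm (K : ℕ) (m : ℕ → ℝ) (a b : ℂ) : ℂ :=
  ∑ k ∈ Finset.range K, ∑ l ∈ Finset.range K, (a ^ k / k ! * (b ^ l / l !)) * (m (k + l) : ℂ)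

open scoped Nat ComplexConjugate in
/-- `|E[U V]| ≤ (E|U|² + E|V|²) / 2` for the truncated exponentials `U`, `V` of `a * X`, `b * X`. -/
lemma hankel_exp {Ω : Type*} [MeasurableSpace Ω] (μ : Measure Ω) {X : Ω → ℝ}
    (hi : ∀ n, Integrable (fun ω => X ω ^ n) μ) (K : ℕ) (a b : ℂ) :
    ‖expForm K (fun n => ∫ ω, X ω ^ n ∂μ) a b‖ ≤
      ((expForm K (fun n => ∫ ω, X ω ^ n ∂μ) a (conj a)).re
        + (expForm K (fun n => ∫ ω, X ω ^ n ∂μ) b (conj b)).re) / 2 := by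
  set U : ℂ → Ω → ℂ := fun a ω => ∑ k ∈ Finset.range K, a ^ k / k ! * (X ω : ℂ) ^ k with hU
  have hUU : ∀ a b ω, U a ω * U b ω = ∑ k ∈ Finset.range K, ∑ l ∈ Finset.range K,
      (a ^ k / k ! * (b ^ l / l !)) * ((X ω ^ (k + l) : ℝ) : ℂ) := by
    intro a b ω
    simp only [hU, Finset.sum_mul_sum]
    refine Finset.sum_congr rfl fun k _ => Finset.sum_congr rfl fun l _ => ?_
    push_cast; ring
  have hint : ∀ a b, Integrable (fun ω => U a ω * U b ω) μ := by
    intro a b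
    simp only [hUU]
    exact integrable_finsetSum _ fun k _ => integrable_finsetSum _ fun l _ =>
      (hi _).ofReal.const_mul _
  have hval : ∀ a b, ∫ ω, U a ω * U b ω ∂μ = expForm K (fun n => ∫ ω, X ω ^ n ∂μ) a b := by
    intro a b
    simp only [hUU, expForm]
    rw [integral_finsetSum _ fun k _ => integrable_finsetSum _ fun l _ =>
      (hi _).ofReal.const_mul _]
    refine Finset.sum_congr rfl fun k _ => ?_
    rw [integral_finsetSum _ fun l _ => (hi _).ofReal.const_mul _]
    refine Finset.sum_congr rfl fun l _ => ?_
    rw [integral_const_mul, integral_complex_ofReal]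
  have hconj : ∀ a ω, U (conj a) ω = conj (U a ω) := by
    intro a ω
    simp [hU, map_sum]
  have hsq : ∀ a ω, U a ω * U (conj a) ω = ((‖U a ω‖ ^ 2 : ℝ) : ℂ) := by
    intro a ω
    rw [hconj, Complex.mul_conj, Complex.normSq_eq_norm_sq]
  have hre : ∀ a, (expForm K (fun n => ∫ ω, X ω ^ n ∂μ) a (conj a)).re = ∫ ω, ‖U a ω‖ ^ 2 ∂μ := by
    intro a
    rw [← hval]
    simp only [hsq]
    rw [integral_complex_ofReal, Complex.ofReal_re]
  have hi2 : ∀ a, Integrable (fun ω => ‖U a ω‖ ^ 2) μ := by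
    intro a
    have := (hint a (conj a)).re
    simp only [hsq] at this
    simpa only [RCLike.re_to_complex, Complex.ofReal_re] using this
  rw [hre, hre, ← hval, ← integral_add (hi2 a) (hi2 b), ← integral_div]
  refine (norm_integral_le_integral_norm _).trans
    (integral_mono (hint a b).norm (((hi2 a).add (hi2 b)).div_const 2) fun ω => ?_)
  simp only [norm_mul]
  nlinarith [sq_nonneg (‖U a ω‖ - ‖U b ω‖)]

/-! ### The Marcinkiewicz theorem for limits of moment sequences -/

open scoped Nat in
lemma sum_antidiagonal_exp {𝕜 : Type*} [Field 𝕜] [CharZero 𝕜] (a b : 𝕜) (n : ℕ) :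
    ∑ p ∈ Finset.HasAntidiagonal.antidiagonal n, a ^ p.1 / p.1 ! * (b ^ p.2 / p.2 !) = (a + b) ^ n / n ! := by
  rw [Finset.Nat.sum_antidiagonal_eq_sum_range_succ (fun i j => a ^ i / (i ! : 𝕜) * (b ^ j / (j ! : 𝕜))),
    add_pow, Finset.sum_div]
  refine Finset.sum_congr rfl fun k hk => ?_
  have hk : k ≤ n := by have := Finset.mem_range.1 hk; omega
  rw [Nat.cast_choose 𝕜 hk]
  have h1 : (n ! : 𝕜) ≠ 0 := by exact_mod_cast n.factorial_ne_zero
  have h2 : (k ! : 𝕜) ≠ 0 := by exact_mod_cast k.factorial_ne_zero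
  have h3 : ((n - k)! : 𝕜) ≠ 0 := by exact_mod_cast (n - k).factorial_ne_zero
  field_simp

/-- A series summed along antidiagonals is, under absolute convergence, a double series. -/
lemma hasSum_prod_of_antidiagonal {f : ℕ × ℕ → ℂ} {g : ℕ → ℂ} {a : ℂ} (hg : HasSum g a)
    (hfg : ∀ n, ∑ p ∈ Finset.HasAntidiagonal.antidiagonal n, f p = g n)
    (hs : Summable fun n => ∑ p ∈ Finset.HasAntidiagonal.antidiagonal n, ‖f p‖) : HasSum f a := by
  rw [← Finset.HasAntidiagonal.sigmaAntidiagonalEquivProd.hasSum_iff]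
  refine HasSum.sigma_of_hasSum hg (fun n => ?_) ?_
  · rw [← hfg n, ← Finset.sum_coe_sort]
    exact hasSum_fintype _
  · rw [← summable_norm_iff, summable_sigma_of_nonneg (fun _ => norm_nonneg _)]
    refine ⟨fun n => (hasSum_fintype _).summable, hs.congr fun n => ?_⟩
    rw [tsum_fintype, ← Finset.sum_coe_sort]
    rfl

open scoped Nat in
/-- If the exponential generating function of `M` is the entire function `F`, the truncated forms
converge to `F (a + b)`. -/
lemma expForm_tendsto {M : ℕ → ℝ} {F : ℂ → ℂ}
    (hF : ∀ z, HasSum (fun n : ℕ => z ^ n / n ! * (M n : ℂ)) (F z)) (a b : ℂ) :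
    Tendsto (fun K => expForm K M a b) atTop (𝓝 (F (a + b))) := by
  have hs : HasSum (fun p : ℕ × ℕ => (a ^ p.1 / p.1 ! * (b ^ p.2 / p.2 !)) * (M (p.1 + p.2) : ℂ))
      (F (a + b)) := by
    refine hasSum_prod_of_antidiagonal (hF (a + b)) (fun n => ?_) ?_
    · rw [← sum_antidiagonal_exp, Finset.sum_mul]
      refine Finset.sum_congr rfl fun p hp => ?_
      rw [Finset.HasAntidiagonal.mem_antidiagonal.1 hp]
    · refine (hF ((‖a‖ + ‖b‖ : ℝ) : ℂ)).summable.norm.congr fun n => ?_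
      rw [norm_mul, norm_div, norm_pow, Complex.norm_real, Complex.norm_real, Complex.norm_natCast,
        Real.norm_of_nonneg (by positivity : 0 ≤ ‖a‖ + ‖b‖), ← sum_antidiagonal_exp,
        Finset.sum_mul]
      refine Finset.sum_congr rfl fun p hp => ?_
      rw [Finset.HasAntidiagonal.mem_antidiagonal.1 hp]
      simp only [norm_mul, norm_div, norm_pow, Complex.norm_real, Complex.norm_natCast]
  have ht : Tendsto (fun K : ℕ => Finset.range K ×ˢ Finset.range K) atTop atTop :=
    by
    have h2 : Tendsto (fun K : ℕ => (Finset.range K, Finset.range K)) atTop atTop := by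
      rw [← prod_atTop_atTop_eq]
      exact tendsto_finset_range.prodMk tendsto_finset_range
    exact tendsto_finsetProd_atTop.comp h2
  refine (Tendsto.comp hs ht).congr fun K => ?_
  rw [Function.comp, expForm, Finset.sum_product]

/-- The leading coefficient of a polynomial that is nonnegative on `(0, ∞)` is nonnegative. -/
lemma top_coeff_nonneg {q : ℕ → ℝ} {N D : ℕ} (hD : D < N) (hq : ∀ k > D, q k = 0)
    (h : ∀ r > (0 : ℝ), 0 ≤ ∑ k ∈ Finset.range N, q k * r ^ (k + 1)) : 0 ≤ q D := by
  have ht : Tendsto (fun r : ℝ => ∑ k ∈ Finset.range N, q k * (r ^ (k + 1) / r ^ (D + 1))) atTop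
      (𝓝 (∑ k ∈ Finset.range N, if k = D then q D else 0)) := by
    refine tendsto_finsetSum _ fun k _ => ?_
    rcases lt_trichotomy k D with hk | hk | hk
    · simpa [hk.ne] using (tendsto_pow_div_pow_atTop_zero (𝕜 := ℝ) (by omega : k + 1 < D + 1)).const_mul (q k)
    · subst hk
      simp only [if_true]
      refine tendsto_const_nhds.congr' ?_
      filter_upwards [eventually_gt_atTop 0] with r hr
      rw [div_self (by positivity), mul_one]
    · simp only [hq k hk, zero_mul, hk.ne', if_false]
      exact tendsto_const_nhds
  rw [Finset.sum_ite_eq' _ _ _, if_pos (Finset.mem_range.2 hD)] at ht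
  refine ge_of_tendsto ht ?_
  filter_upwards [eventually_gt_atTop 0] with r hr
  have := div_nonneg (h r hr) (by positivity : 0 ≤ r ^ (D + 1))
  rwa [Finset.sum_div, Finset.sum_congr rfl fun k _ => mul_div_assoc _ _ _] at this

/-- The cumulant generating polynomial `∑_{1 ≤ n ≤ N} κ n * z ^ n / n!` on `ℂ`. -/
noncomputable def cumPoly (κ : ℕ → ℝ) (N : ℕ) (z : ℂ) : ℂ :=
  ∑ k ∈ Finset.range N, ((κ (k + 1) / (k + 1).factorial : ℝ) : ℂ) * z ^ (k + 1)

lemma cumPoly_differentiable (κ : ℕ → ℝ) (N : ℕ) : Differentiable ℂ (cumPoly κ N) := by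
  unfold cumPoly; fun_prop

lemma iteratedDeriv_cumPoly {κ : ℕ → ℝ} {N : ℕ} (hκ : ∀ n ≥ N, κ n = 0) (n : ℕ) :
    iteratedDeriv (n + 1) (cumPoly κ N) 0 = κ (n + 1) := by
  unfold cumPoly
  rw [iteratedDeriv_fun_sum fun k _ => by fun_prop]
  have : ∀ k ∈ Finset.range N, iteratedDeriv (n + 1)
      (fun z : ℂ => ((κ (k + 1) / (k + 1).factorial : ℝ) : ℂ) * z ^ (k + 1)) 0
        = if n = k then (κ (n + 1) : ℂ) else 0 := by
    intro k _
    rw [iteratedDeriv_const_mul _ (by fun_prop), iteratedDeriv_fun_pow_zero]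
    by_cases h : n = k
    · subst h
      have : ((n + 1).factorial : ℂ) ≠ 0 := by exact_mod_cast (n + 1).factorial_ne_zero
      simp only [if_true]
      push_cast
      field_simp
    · simp [h]
  rw [Finset.sum_congr rfl this, Finset.sum_ite_eq]
  split_ifs with h
  · rfl
  · rw [hκ _ (by have := mt Finset.mem_range.2 h; omega)]; simp

open scoped Nat in
/-- If only finitely many cumulants are nonzero, the moments are the Taylor coefficients of the
entire function `exp (cumPoly κ N)`. -/
lemma hasSum_exp_cumPoly {κ M : ℕ → ℝ} (h : MomentCumulant κ M) {N : ℕ} (hκ : ∀ n ≥ N, κ n = 0) (z : ℂ) :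
    HasSum (fun n : ℕ => z ^ n / n ! * (M n : ℂ)) (Complex.exp (cumPoly κ N z)) := by
  have hP := cumPoly_differentiable κ N
  have hF : Differentiable ℂ fun z => Complex.exp (cumPoly κ N z) := hP.cexp
  have hd : ∀ n, iteratedDeriv n (fun z => Complex.exp (cumPoly κ N z)) 0 = (M n : ℂ) := by
    intro n
    induction n using Nat.strong_induction_on with
    | _ n ih =>
      cases n with
      | zero => simp [h.zero, cumPoly]
      | succ n =>
        rw [iteratedDeriv_succ_of_deriv_eq_mul (hF.analyticAt 0) (hP.analyticAt 0) (Eventually.of_forall fun z => ?_) n, h.succ]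
        · push_cast
          refine Finset.sum_congr rfl fun k _ => ?_
          rw [iteratedDeriv_cumPoly hκ, ih _ (by omega)]
        · rw [((hP z).hasDerivAt.cexp).deriv, mul_comm]
  have := Complex.hasSum_taylorSeries_of_entire hF 0 z
  simp only [hd, smul_eq_mul, sub_zero] at this
  have e : (fun n : ℕ => z ^ n / n ! * (M n : ℂ)) = fun n : ℕ => (n ! : ℂ)⁻¹ * (z ^ n * (M n : ℂ)) :=
    funext fun n => by ring
  rw [e]
  exact this

open scoped ComplexConjugate in
/-- Marcinkiewicz's theorem at the level of moments: if the limit `M` of moment sequences has only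
finitely many nonzero cumulants `κ`, then `κ n = 0` for `n > 2`. The sequence `M` need not be known
to come from a random variable, since the Hankel inequalities `hankel_exp` pass to the limit. They
give the ridge inequality `Re P(z) ≤ P(Re z)` for `P = cumPoly κ N`. Along `z = r * e^{iθ}` as
`r → ∞` the leading term `κ d * z ^ d / d!` yields `κ d * (cos θ ^ d - cos (d * θ)) ≥ 0`, which for
`d ≥ 3` forces `κ d = 0`. -/
lemma marcinkiewicz {ι : Type*} {l : Filter ι} [l.NeBot] {Ω : Type*} [MeasurableSpace Ω]
    (μ : Measure Ω) {X : ι → Ω → ℝ} (hi : ∀ j n, Integrable (fun ω => X j ω ^ n) μ)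
    {κ M : ℕ → ℝ} (h : MomentCumulant κ M) (hM : ∀ n, Tendsto (fun j => ∫ ω, X j ω ^ n ∂μ) l (𝓝 (M n)))
    {N : ℕ} (hκ : ∀ n ≥ N, κ n = 0) : ∀ n > 2, κ n = 0 := by
  have hlim : ∀ K a b, Tendsto (fun j => expForm K (fun n => ∫ ω, X j ω ^ n ∂μ) a b) l
      (𝓝 (expForm K M a b)) := fun K a b =>
    tendsto_finsetSum _ fun k _ => tendsto_finsetSum _ fun i _ =>
      tendsto_const_nhds.mul ((Complex.continuous_ofReal.tendsto _).comp (hM _))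
  have hre := Complex.continuous_re.tendsto
  have hK : ∀ K a b, ‖expForm K M a b‖ ≤
      ((expForm K M a (conj a)).re + (expForm K M b (conj b)).re) / 2 := fun K a b =>
    le_of_tendsto_of_tendsto' (hlim K a b).norm
      ((((hre _).comp (hlim K a (conj a))).add ((hre _).comp (hlim K b (conj b)))).div_const 2)
      fun j => hankel_exp μ (hi j) K a b
  have hF : ∀ a b, ‖Complex.exp (cumPoly κ N (a + b))‖ ≤
      ((Complex.exp (cumPoly κ N (a + conj a))).re
        + (Complex.exp (cumPoly κ N (b + conj b))).re) / 2 := fun a b =>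
    have ht := expForm_tendsto (hasSum_exp_cumPoly h hκ)
    le_of_tendsto_of_tendsto' (ht a b).norm
      ((((hre _).comp (ht a (conj a))).add ((hre _).comp (ht b (conj b)))).div_const 2)
      fun K => hK K a b
  have hreal : ∀ x : ℝ, cumPoly κ N x =
      ((∑ k ∈ Finset.range N, κ (k + 1) / (k + 1).factorial * x ^ (k + 1) : ℝ) : ℂ) := by
    intro x; simp [cumPoly]
  have hridge : ∀ z : ℂ, (cumPoly κ N z).re ≤
      ∑ k ∈ Finset.range N, κ (k + 1) / (k + 1).factorial * z.re ^ (k + 1) := by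
    intro z
    have := hF (z.re / 2 : ℝ) ((z.re / 2 : ℝ) + z.im * Complex.I)
    have e1 : ((z.re / 2 : ℝ) : ℂ) + ((z.re / 2 : ℝ) + z.im * Complex.I) = z := by
      apply Complex.ext <;> simp
    have e2 : ((z.re / 2 : ℝ) : ℂ) + conj ((z.re / 2 : ℝ) : ℂ) = (z.re : ℂ) := by
      rw [Complex.add_conj]; congr 1; simp; ring
    have e3 : ((z.re / 2 : ℝ) + z.im * Complex.I : ℂ) + conj ((z.re / 2 : ℝ) + z.im * Complex.I : ℂ)
        = (z.re : ℂ) := by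
      rw [Complex.add_conj]; congr 1; simp; ring
    rw [e1, e2, e3, hreal, Complex.norm_exp, Complex.exp_ofReal_re, add_self_div_two,
      Real.exp_le_exp] at this
    exact this
  have hcoef : ∀ D < N, (∀ k > D, κ (k + 1) = 0) → ∀ w : ℂ,
      0 ≤ κ (D + 1) / (D + 1).factorial * (w.re ^ (D + 1) - (w ^ (D + 1)).re) := by
    intro D hD hz w
    refine top_coeff_nonneg (q := fun k => κ (k + 1) / (k + 1).factorial *
      (w.re ^ (k + 1) - (w ^ (k + 1)).re)) hD (fun k hk => by simp [hz k hk]) fun r hr => ?_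
    have := hridge (r * w)
    rw [← sub_nonneg] at this
    convert this using 1
    simp only [cumPoly, Complex.re_sum, ← Finset.sum_sub_distrib]
    refine Finset.sum_congr rfl fun k _ => ?_
    rw [Complex.re_ofReal_mul, Complex.re_ofReal_mul, mul_pow, mul_pow, ← Complex.ofReal_pow,
      Complex.re_ofReal_mul]
    ring
  have hstep : ∀ D ≥ 2, (∀ k > D, κ (k + 1) = 0) → κ (D + 1) = 0 := by
    intro D hD2 hz
    rcases le_or_gt N D with hD | hD
    · exact hκ _ (by omega)
    have hfac : (0 : ℝ) < (D + 1).factorial := by exact_mod_cast (D + 1).factorial_pos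
    have hd : (3 : ℝ) ≤ (D + 1 : ℕ) := by exact_mod_cast (by omega : 3 ≤ D + 1)
    have hw : ∀ θ : ℝ, 0 ≤ κ (D + 1) * (Real.cos θ ^ (D + 1) - Real.cos ((D + 1 : ℕ) * θ)) := by
      intro θ
      have := hcoef D hD hz (Complex.exp (θ * Complex.I))
      rw [← Complex.exp_nat_mul, ← mul_assoc, ← Complex.ofReal_natCast, ← Complex.ofReal_mul,
        Complex.exp_ofReal_mul_I_re, Complex.exp_ofReal_mul_I_re, div_mul_eq_mul_div] at this
      have := mul_nonneg this hfac.le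
      rwa [div_mul_cancel₀ _ hfac.ne'] at this
    have hpi := Real.pi_pos
    have hd0 : (0 : ℝ) < (D + 1 : ℕ) := by linarith
    -- At `θ = 2π/d` the bracket is `cos θ ^ d - 1 < 0`; at `θ = π/d` it is `cos θ ^ d + 1 > 0`.
    apply le_antisymm
    · have h1 := hw (2 * Real.pi / (D + 1 : ℕ))
      rw [mul_div_cancel₀ _ hd0.ne', Real.cos_two_pi] at h1
      have hlt : 2 * Real.pi / (D + 1 : ℕ) < Real.pi := by
        rw [div_lt_iff₀ hd0]; nlinarith
      have hpos : 0 < 2 * Real.pi / (D + 1 : ℕ) := by positivity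
      have hc1 : Real.cos (2 * Real.pi / (D + 1 : ℕ)) < 1 := by
        have := Real.cos_lt_cos_of_nonneg_of_le_pi le_rfl hlt.le hpos
        simpa using this
      have hc2 : -1 < Real.cos (2 * Real.pi / (D + 1 : ℕ)) := by
        have := Real.cos_lt_cos_of_nonneg_of_le_pi hpos.le le_rfl hlt
        simpa using this
      have : Real.cos (2 * Real.pi / (D + 1 : ℕ)) ^ (D + 1) < 1 := by
        refine lt_of_le_of_lt (le_abs_self _) ?_
        rw [abs_pow]
        exact pow_lt_one₀ (abs_nonneg _) (abs_lt.2 ⟨hc2, hc1⟩) (by omega)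
      by_contra hcon
      nlinarith
    · have h1 := hw (Real.pi / (D + 1 : ℕ))
      rw [mul_div_cancel₀ _ hd0.ne', Real.cos_pi] at h1
      have : 0 < Real.cos (Real.pi / (D + 1 : ℕ)) := by
        apply Real.cos_pos_of_mem_Ioo
        constructor
        · have : 0 < Real.pi / (D + 1 : ℕ) := by positivity
          linarith
        · rw [div_lt_iff₀ hd0]; nlinarith
      have := pow_pos this (D + 1)
      by_contra hcon
      nlinarith
  have hdown : ∀ i, ∀ k ≥ 2, k + i ≥ N → κ (k + 1) = 0 := by
    intro i
    induction i with
    | zero => intro k _ hk; exact hκ _ (by omega)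
    | succ i ih =>
      intro k hk hki
      exact hstep k hk fun k' hk' => ih k' (by omega) (by omega)
  intro n hn
  obtain ⟨n, rfl⟩ := Nat.exists_eq_add_of_le' (by omega : 1 ≤ n)
  exact hdown N n (by omega) (by omega)

/-! ### Cumulants tend to zero -/

lemma Ultrafilter.exists_tendsto_of_bdd {ι : Type*} (u : Ultrafilter ι) {x : ι → ℝ} {C : ℝ}
    (h : ∀ᶠ j in (u : Filter ι), |x j| ≤ C) : ∃ L, Tendsto x u (𝓝 L) := by
  obtain ⟨L, -, hL⟩ := (isCompact_Icc (a := -C) (b := C)).ultrafilter_le_nhds (u.map x) (by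
    rw [le_principal_iff]
    exact h.mono fun j hj => abs_le.1 hj)
  exact ⟨L, hL⟩

/-- A size of the cumulants of index `1, …, N` that is homogeneous of degree one under scaling of
the random variable (`cumSize_scale`). -/
noncomputable def cumSize (N : ℕ) (c : ℕ → ℝ) : ℝ :=
  ∑ n ∈ Finset.Icc 1 N, |c n| ^ (1 / (n : ℝ))

lemma abs_le_cumSize_pow {N n : ℕ} (c : ℕ → ℝ) (h1 : 1 ≤ n) (hn : n ≤ N) :
    |c n| ≤ cumSize N c ^ n := by
  have h : |c n| ^ (1 / (n : ℝ)) ≤ cumSize N c :=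
    Finset.single_le_sum (f := fun n : ℕ => |c n| ^ (1 / (n : ℝ)))
      (fun i _ => Real.rpow_nonneg (abs_nonneg _) _) (Finset.mem_Icc.2 ⟨h1, hn⟩)
  have h2 := pow_le_pow_left₀ (Real.rpow_nonneg (abs_nonneg _) _) h n
  rwa [one_div, Real.rpow_inv_natCast_pow (abs_nonneg _) (by omega)] at h2

lemma cumSize_scale {N : ℕ} (c : ℕ → ℝ) {s : ℝ} (hs : 0 ≤ s) :
    cumSize N (fun n => s ^ n * c n) = s * cumSize N c := by
  unfold cumSize
  rw [Finset.mul_sum]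
  refine Finset.sum_congr rfl fun n hn => ?_
  have : n ≠ 0 := by have := (Finset.mem_Icc.1 hn).1; omega
  rw [abs_mul, abs_of_nonneg (pow_nonneg hs n), Real.mul_rpow (pow_nonneg hs n) (abs_nonneg _),
    one_div, Real.pow_rpow_inv_natCast hs this]

lemma cumSize_tendsto_zero {ι : Type*} {l : Filter ι} {N : ℕ} {c : ι → ℕ → ℝ}
    (h : ∀ n ≥ 1, Tendsto (fun j => c j n) l (𝓝 0)) : Tendsto (fun j => cumSize N (c j)) l (𝓝 0) := by
  have : (0 : ℝ) = ∑ n ∈ Finset.Icc 1 N, 0 := by simp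
  rw [this]
  refine tendsto_finsetSum _ fun n hn => ?_
  have h1 := (Finset.mem_Icc.1 hn).1
  have hn0 : 0 < 1 / (n : ℝ) := by positivity
  have := (h n h1).abs.rpow_const (p := 1 / (n : ℝ)) (Or.inr hn0.le)
  rw [abs_zero, Real.zero_rpow hn0.ne'] at this
  exact this

/-- If the size were unbounded along `u`, dividing the random variables by it would give variables
whose second moments tend to `0` while their cumulants have size `1`. The Cauchy–Schwarz inequality
(`hankel_two`) makes all limiting moments of index `≥ 1`, hence all limiting cumulants, vanish, a
contradiction. -/
lemma cumSize_bounded {Ω : Type*} [MeasurableSpace Ω] (μ : Measure Ω)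
    (u : Ultrafilter ℕ) {X : ℕ → Ω → ℝ} (hi : ∀ j n, Integrable (fun ω => X j ω ^ n) μ)
    {c : ℕ → ℕ → ℝ} (hmc : ∀ j, MomentCumulant (c j) (fun n => ∫ ω, X j ω ^ n ∂μ))
    (hc1 : ∀ j, c j 1 = 0) (hc2 : ∀ j, c j 2 = 1) {N : ℕ}
    (hN : ∀ n ≥ N, Tendsto (fun j => c j n) u (𝓝 0)) :
    ∃ C, ∀ᶠ j in (u : Filter ℕ), cumSize N (c j) ≤ C := by
  by_contra! hcon
  have hS : Tendsto (fun j => cumSize N (c j)) u atTop := by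
    refine tendsto_atTop.2 fun C => ?_
    exact (hcon C).mono fun j hj => hj.le
  have hs0 : Tendsto (fun j => (cumSize N (c j))⁻¹) u (𝓝 0) := hS.inv_tendsto_atTop
  have hS1 := hS.eventually_ge_atTop 1
  have hlim : ∀ n, ∃ L, n ≥ 1 → Tendsto (fun j => (cumSize N (c j))⁻¹ ^ n * c j n) u (𝓝 L) := by
    intro n
    rcases Nat.eq_zero_or_pos n with rfl | hn
    · exact ⟨0, by simp⟩
    rcases le_or_gt N n with h | h
    · exact ⟨0, fun _ => by simpa using (hs0.pow n).mul (hN n h)⟩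
    · obtain ⟨L, hL⟩ := Ultrafilter.exists_tendsto_of_bdd u
        (x := fun j => (cumSize N (c j))⁻¹ ^ n * c j n) (C := 1) (by
          filter_upwards [hS1] with j hj
          have hpos : 0 < cumSize N (c j) := by linarith
          rw [abs_mul, abs_of_nonneg (by positivity), inv_pow, inv_mul_le_iff₀ (by positivity),
            mul_one]
          exact abs_le_cumSize_pow _ hn h.le)
      exact ⟨L, fun _ => hL⟩
  choose κ hκ using hlim
  obtain ⟨M, hM, hMt⟩ := MomentCumulant.exists_tendsto
    (fun j => (hmc j).scale (cumSize N (c j))⁻¹) hκ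
  have hκ1 : κ 1 = 0 := tendsto_nhds_unique (hκ 1 le_rfl) (by simp [hc1])
  have hκ2 : κ 2 = 0 := tendsto_nhds_unique (hκ 2 (by norm_num)) (by simpa [hc2] using hs0.pow 2)
  have hM2 : M 2 = 0 := by rw [hM.two, hκ1, hκ2]; simp
  have hM0 : ∀ n ≥ 1, M n = 0 := by
    intro n hn
    obtain ⟨p, rfl⟩ := Nat.exists_eq_add_of_le' hn
    have hq : ∀ t : ℝ, 0 ≤ t ^ 2 * M (2 * p) + 2 * t * M (p + 1) := by
      intro t
      have ht := (((hMt (2 * p)).const_mul (t ^ 2)).add ((hMt (p + 1)).const_mul (2 * t))).add (hMt 2)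
      rw [hM2, add_zero] at ht
      refine ge_of_tendsto' ht fun j => ?_
      have := hankel_two μ (hi j) p (t * (cumSize N (c j))⁻¹ ^ p) (cumSize N (c j))⁻¹
      refine this.trans_eq ?_
      ring
    -- `t ^ 2 * A + 2 * t * B ≥ 0` for all `t` forces `B = 0`; it is tested at `t = -B / (A + 1)`.
    set A := M (2 * p)
    set B := M (p + 1)
    have hA : 0 ≤ A := by nlinarith [hq 1, hq (-1)]
    have := hq (-B / (A + 1))
    have h3 : (-B / (A + 1)) ^ 2 * A + 2 * (-B / (A + 1)) * B = - (B ^ 2 * (A + 2)) / (A + 1) ^ 2 := by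
      field_simp; ring
    rw [h3, le_div_iff₀ (by positivity)] at this
    have : B ^ 2 ≤ 0 := by nlinarith [sq_nonneg B, mul_nonneg (sq_nonneg B) hA]
    exact pow_eq_zero_iff (two_ne_zero) |>.1 (le_antisymm this (sq_nonneg B))
  have hκ0 := hM.eq_zero hM0
  have hz := cumSize_tendsto_zero (N := N) (l := (u : Filter ℕ))
    (c := fun j n => (cumSize N (c j))⁻¹ ^ n * c j n)
    fun n hn => by simpa only [hκ0 n hn] using hκ n hn
  have h1 : Tendsto (fun j => cumSize N (fun n => (cumSize N (c j))⁻¹ ^ n * c j n)) u (𝓝 1) := by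
    refine tendsto_const_nhds.congr' ?_
    filter_upwards [hS1] with j hj
    have hpos : 0 < cumSize N (c j) := by linarith
    rw [cumSize_scale _ (by positivity), inv_mul_cancel₀ hpos.ne']
  exact zero_ne_one (tendsto_nhds_unique hz h1)

/-- Along every ultrafilter the cumulants are bounded, so they converge, and `marcinkiewicz`
identifies the limits. -/
lemma cumulants_tendsto {Ω : Type*} [MeasurableSpace Ω] (μ : Measure Ω)
    {X : ℕ → Ω → ℝ} (hi : ∀ j n, Integrable (fun ω => X j ω ^ n) μ)
    {c : ℕ → ℕ → ℝ} (hmc : ∀ j, MomentCumulant (c j) (fun n => ∫ ω, X j ω ^ n ∂μ))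
    (hc1 : ∀ j, c j 1 = 0) (hc2 : ∀ j, c j 2 = 1) {N : ℕ}
    (hN : ∀ n ≥ N, Tendsto (fun j => c j n) atTop (𝓝 0)) (n : ℕ) (hn : n > 2) :
    Tendsto (fun j => c j n) atTop (𝓝 0) := by
  rw [tendsto_iff_ultrafilter]
  intro u hu
  have hNu : ∀ n ≥ N, Tendsto (fun j => c j n) u (𝓝 0) := fun n hn => (hN n hn).mono_left hu
  obtain ⟨C, hC⟩ := cumSize_bounded μ u hi hmc hc1 hc2 hNu
  have hlim : ∀ n, ∃ L, n ≥ 1 → Tendsto (fun j => c j n) u (𝓝 L) := by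
    intro n
    rcases Nat.eq_zero_or_pos n with rfl | hn
    · exact ⟨0, by simp⟩
    rcases le_or_gt N n with h | h
    · exact ⟨0, fun _ => hNu n h⟩
    · obtain ⟨L, hL⟩ := Ultrafilter.exists_tendsto_of_bdd u (x := fun j => c j n) (C := C ^ n) (by
        filter_upwards [hC] with j hj
        refine (abs_le_cumSize_pow _ hn h.le).trans (pow_le_pow_left₀ ?_ hj n)
        exact Finset.sum_nonneg fun i _ => Real.rpow_nonneg (abs_nonneg _) _)
      exact ⟨L, fun _ => hL⟩
  choose κ hκ using hlim
  obtain ⟨M, hM, hMt⟩ := MomentCumulant.exists_tendsto hmc hκ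
  have h0 : κ n = 0 := marcinkiewicz (N := N + 1) μ hi hM hMt (fun k hk =>
    tendsto_nhds_unique (hκ k (by omega)) (hNu k (by omega))) n hn
  simpa only [h0] using hκ n (by omega)

/-! ### The method of moments for the Gaussian limit -/

open scoped Nat in
/-- The Taylor remainder of `exp (i y)` is bounded by the first omitted term. -/
lemma norm_exp_I_sub_sum_le (n : ℕ) (y : ℝ) :
    ‖Complex.exp (y * Complex.I) - ∑ k ∈ Finset.range n, (y * Complex.I) ^ k / (k ! : ℂ)‖
      ≤ |y| ^ n / (n ! : ℝ) := by
  -- By induction on `n`: the derivative of the remainder of order `n + 1` is `s` times that of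
  -- order `n`. The values `s = I` and `s = -I` account for the two signs of `y`.
  have hpos : ∀ n : ℕ, ∀ s : ℂ, ‖s‖ = 1 → s.re = 0 → ∀ y : ℝ, 0 ≤ y →
      ‖Complex.exp (y * s) - ∑ k ∈ Finset.range n, (y * s) ^ k / (k ! : ℂ)‖ ≤ y ^ n / (n ! : ℝ) := by
    intro n s hs hs0
    induction n with
    | zero => intro y hy; simp [Complex.norm_exp, hs0]
    | succ n ih =>
      intro y hy
      have hd : ∀ x : ℝ, HasDerivAt (fun x : ℝ => Complex.exp (x * s) -
          ∑ k ∈ Finset.range (n + 1), (x * s) ^ k / k !)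
          (s * (Complex.exp (x * s) - ∑ k ∈ Finset.range n, (x * s) ^ k / k !)) x := by
        intro x
        have h0 : HasDerivAt (fun x : ℝ => (x : ℂ) * s) s x := by
          simpa using (Complex.ofRealCLM.hasDerivAt (x := x)).mul_const s
        have h1 : HasDerivAt (fun x : ℝ => ∑ k ∈ Finset.range (n + 1), (x * s : ℂ) ^ k / k !)
            (∑ k ∈ Finset.range (n + 1), (k * (x * s : ℂ) ^ (k - 1) * s) / k !) x :=
          HasDerivAt.fun_sum fun k _ => (h0.pow k).div_const _
        refine (h0.cexp.sub h1).congr_deriv ?_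
        rw [Finset.sum_range_succ', mul_sub, Finset.mul_sum]
        simp only [Nat.cast_zero, zero_mul, zero_div, add_zero]
        congr 1
        · ring
        · refine Finset.sum_congr rfl fun k _ => ?_
          have h2 : (k ! : ℂ) ≠ 0 := by exact_mod_cast k.factorial_ne_zero
          have h3 : (k + 1 : ℂ) ≠ 0 := by exact_mod_cast k.succ_ne_zero
          rw [Nat.factorial_succ]
          push_cast
          field_simp
      refine image_norm_le_of_norm_deriv_right_le_deriv_boundary (a := 0) (b := y)
        (f := fun x : ℝ => Complex.exp (x * s) - ∑ k ∈ Finset.range (n + 1), (x * s : ℂ) ^ k / k !)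
        (B := fun x => x ^ (n + 1) / (n + 1)!) (B' := fun x => x ^ n / n !)
        (fun x _ => (hd x).continuousAt.continuousWithinAt)
        (fun x _ => (hd x).hasDerivWithinAt) ?_ (fun x => ?_) (fun x hx => ?_) ⟨hy, le_rfl⟩
      · simp [Finset.sum_range_succ']
      · refine ((hasDerivAt_pow (n + 1) x).div_const _).congr_deriv ?_
        have h2 : (n ! : ℝ) ≠ 0 := by exact_mod_cast n.factorial_ne_zero
        rw [Nat.factorial_succ]
        push_cast
        field_simp
      · rw [norm_mul, hs, one_mul]
        exact ih x hx.1
  rcases le_total 0 y with hy | hy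
  · rw [abs_of_nonneg hy]
    exact hpos n Complex.I (by simp) (by simp) y hy
  · have := hpos n (-Complex.I) (by simp) (by simp) (-y) (by linarith)
    rw [abs_of_nonpos hy]
    simpa using this

open scoped Nat in
/-- The even order `2 * K` makes the remainder an honest moment, without absolute values. -/
lemma norm_charFun_sub_le {Ω : Type*} [MeasurableSpace Ω] (μ : Measure Ω) [IsProbabilityMeasure μ]
    {X : Ω → ℝ} (hX : Measurable X) (hi : ∀ n, Integrable (fun ω => X ω ^ n) μ) (t : ℝ) (K : ℕ) :
    ‖∫ ω, Complex.exp (t * X ω * Complex.I) ∂μ -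
      ∑ k ∈ Finset.range (2 * K), (t * Complex.I) ^ k / k ! * ((∫ ω, X ω ^ k ∂μ : ℝ) : ℂ)‖ ≤
      t ^ (2 * K) / (2 * K)! * ∫ ω, X ω ^ (2 * K) ∂μ := by
  have hterm : ∀ k : ℕ, Integrable (fun ω => (t * Complex.I) ^ k / k ! * ((X ω ^ k : ℝ) : ℂ)) μ :=
    fun k => (hi k).ofReal.const_mul _
  have hexp : Integrable (fun ω => Complex.exp (t * X ω * Complex.I)) μ := by
    refine Integrable.of_bound (C := 1) (by fun_prop) (Eventually.of_forall fun ω => ?_)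
    rw [← Complex.ofReal_mul, Complex.norm_exp_ofReal_mul_I]
  have hsum : ∑ k ∈ Finset.range (2 * K), (t * Complex.I) ^ k / k ! * ((∫ ω, X ω ^ k ∂μ : ℝ) : ℂ) =
      ∫ ω, ∑ k ∈ Finset.range (2 * K), (t * Complex.I) ^ k / k ! * ((X ω ^ k : ℝ) : ℂ) ∂μ := by
    rw [integral_finsetSum _ fun k _ => hterm k]
    refine Finset.sum_congr rfl fun k _ => ?_
    rw [integral_const_mul, integral_complex_ofReal]
  rw [hsum, ← integral_sub hexp (integrable_finsetSum _ fun k _ => hterm k), ← integral_const_mul]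
  refine norm_integral_le_of_norm_le ((hi _).const_mul _) (Eventually.of_forall fun ω => ?_)
  have := norm_exp_I_sub_sum_le (2 * K) (t * X ω)
  rw [(even_two_mul K).pow_abs, mul_pow, mul_div_right_comm] at this
  refine le_of_eq_of_le ?_ this
  push_cast
  congr 2
  refine Finset.sum_congr rfl fun k _ => ?_
  ring

lemma momentCumulant_gaussian : MomentCumulant (fun n => if n = 2 then 1 else 0) (fun n => ∫ x, x ^ n ∂(gaussianReal 0 1)) := by
  have h := momentCumulant_of_mgf (gaussianReal 0 1) id (by simp [integrableExpSet_id_gaussianReal])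
  have hc : cgf id (gaussianReal 0 1) = fun t => 1 / 2 * t ^ 2 := by
    ext t
    rw [cgf_gaussianReal (μ := 0) (v := 1) (by simp)]
    simp; ring
  simp only [hc, id] at h
  convert h using 2 with n
  rw [iteratedDeriv_const_mul _ (by fun_prop), iteratedDeriv_fun_pow_zero]
  split_ifs <;> simp

open scoped Nat in
lemma gaussian_remainder (t : ℝ) : Tendsto (fun n : ℕ => t ^ n / n ! * ∫ x, x ^ n ∂(gaussianReal 0 1))
    atTop (𝓝 0) := by
  suffices h : Tendsto (fun n : ℕ => ∫ x, t ^ n / (n ! : ℝ) * x ^ n ∂(gaussianReal 0 1)) atTop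
      (𝓝 (∫ x, (0 : ℝ) ∂(gaussianReal 0 1))) by
    simpa only [integral_zero, integral_const_mul] using h
  refine tendsto_integral_of_dominated_convergence (μ := gaussianReal 0 1)
    (F := fun (n : ℕ) (x : ℝ) => t ^ n / (n ! : ℝ) * x ^ n) (f := fun _ => 0)
    (fun x => Real.exp (|t| * |x|))
    (fun n => by fun_prop)
    (integrable_exp_abs_mul_abs (X := fun x : ℝ => x) (integrable_exp_mul_gaussianReal t)
      (integrable_exp_mul_gaussianReal (-t)))
    (fun n => Eventually.of_forall fun x => ?_) (Eventually.of_forall fun x => ?_)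
  · have := Real.pow_div_factorial_le_exp (|t| * |x|) (by positivity) n
    refine le_of_eq_of_le ?_ this
    rw [norm_mul, norm_div, norm_pow, norm_pow, mul_pow, Real.norm_natCast, Real.norm_eq_abs,
      Real.norm_eq_abs]
    ring
  · refine (FloorSemiring.tendsto_pow_div_factorial_atTop (t * x)).congr fun n => ?_
    rw [mul_pow]; ring

/-- Convergence of moments to those of `N(0,1)` implies pointwise convergence of characteristic
functions: the Taylor remainders are small for the Gaussian, hence eventually for `X j`. -/
lemma charFun_tendsto {Ω : Type*} [MeasurableSpace Ω] (μ : Measure Ω) [IsProbabilityMeasure μ]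
    {X : ℕ → Ω → ℝ} (hX : ∀ j, Measurable (X j)) (hi : ∀ j n, Integrable (fun ω => X j ω ^ n) μ)
    (hm : ∀ n, Tendsto (fun j => ∫ ω, X j ω ^ n ∂μ) atTop (𝓝 (∫ x, x ^ n ∂(gaussianReal 0 1))))
    (t : ℝ) : Tendsto (fun j => ∫ ω, Complex.exp (t * X j ω * Complex.I) ∂μ) atTop
      (𝓝 (∫ x : ℝ, Complex.exp (t * x * Complex.I) ∂(gaussianReal 0 1))) := by
  have hg : ∀ n, Integrable (fun x : ℝ => x ^ n) (gaussianReal 0 1) := fun n =>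
    integrable_pow_of_mem_interior_integrableExpSet (X := fun x : ℝ => x)
      (by simp [integrableExpSet_fun_id_gaussianReal]) n
  rw [Metric.tendsto_atTop']
  intro ε hε
  have hrem := (gaussian_remainder t).comp (tendsto_id.const_mul_atTop' (two_pos : 0 < 2))
  obtain ⟨K, hK⟩ := (hrem.eventually_lt_const (by positivity : 0 < ε / 3)).exists
  simp only [Function.comp, id] at hK
  have h1 := ((hm (2 * K)).const_mul (t ^ (2 * K) / (2 * K).factorial)).eventually_lt_const hK
  have h2 : Tendsto (fun j => ∑ k ∈ Finset.range (2 * K),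
      (t * Complex.I) ^ k / k.factorial * ((∫ ω, X j ω ^ k ∂μ : ℝ) : ℂ)) atTop
      (𝓝 (∑ k ∈ Finset.range (2 * K),
      (t * Complex.I) ^ k / k.factorial * ((∫ x, x ^ k ∂(gaussianReal 0 1) : ℝ) : ℂ))) :=
    tendsto_finsetSum _ fun k _ =>
      tendsto_const_nhds.mul ((Complex.continuous_ofReal.tendsto _).comp (hm _))
  have h2' := Metric.tendsto_nhds.1 h2 (ε / 3) (by positivity)
  obtain ⟨j0, hj0⟩ := eventually_atTop.1 (h1.and h2')
  refine ⟨j0, fun j hj => ?_⟩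
  obtain ⟨a1, a2⟩ := hj0 j hj.le
  have b1 := norm_charFun_sub_le μ (hX j) (hi j) t K
  have b2 := norm_charFun_sub_le (gaussianReal 0 1) measurable_id hg t K
  simp only [id] at b2
  rw [← dist_eq_norm] at b1 b2
  rw [dist_comm] at b2
  refine (dist_triangle4 _ _ _ _).trans_lt ((add_lt_add (add_lt_add (b1.trans_lt a1) a2)
    (b2.trans_lt hK)).trans_eq ?_)
  ring

/-- (Lemma 3 of the paper.) If `(η_j)` are random variables with
exponential moments near `0`, cumulants `c₁ = 0`, `c₂ = 1`, and `c_n(η_j) → 0` for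
every `n ≥ N`, then `c_n(η_j) → 0` for every `n > 2` and `η_j` converges in
distribution to the standard normal law. -/
theorem stmt13 {Ω : Type*} [MeasurableSpace Ω] (μ : Measure Ω) [IsProbabilityMeasure μ]
    (η : ℕ → Ω → ℝ) (hmeas : ∀ j, Measurable (η j))
    (hexp : ∀ j, ∃ ε > (0 : ℝ), ∀ t ∈ Set.Ioo (-ε) ε,
      Integrable (fun ω => Real.exp (t * η j ω)) μ)
    (hc1 : ∀ j, iteratedDeriv 1 (cgf (η j) μ) 0 = 0)
    (hc2 : ∀ j, iteratedDeriv 2 (cgf (η j) μ) 0 = 1)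
    (N : ℕ)
    (hN : ∀ n ≥ N, Tendsto (fun j => iteratedDeriv n (cgf (η j) μ) 0) atTop (𝓝 0)) :
    (∀ n > 2, Tendsto (fun j => iteratedDeriv n (cgf (η j) μ) 0) atTop (𝓝 0)) ∧
    (∀ g : BoundedContinuousFunction ℝ ℝ,
      Tendsto (fun j => ∫ ω, g (η j ω) ∂μ) atTop
        (𝓝 (∫ x, g x ∂(gaussianReal 0 1)))) := by
  have h0 : ∀ j, 0 ∈ interior (integrableExpSet (η j) μ) := by
    intro j
    obtain ⟨ε, hε, h⟩ := hexp j
    exact mem_interior.2 ⟨Set.Ioo (-ε) ε, fun t ht => h t ht, isOpen_Ioo, by simpa using hε⟩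
  have hi : ∀ j n, Integrable (fun ω => η j ω ^ n) μ := fun j n =>
    integrable_pow_of_mem_interior_integrableExpSet (h0 j) n
  have hmc := fun j => momentCumulant_of_mgf μ (η j) (h0 j)
  have hcum := cumulants_tendsto μ hi hmc hc1 hc2 hN
  refine ⟨hcum, fun g => ?_⟩
  have hmom := MomentCumulant.tendsto hmc momentCumulant_gaussian (l := atTop) (fun n hn => by
    rcases (by omega : n = 1 ∨ n = 2 ∨ n > 2) with rfl | rfl | h
    · simp only [hc1]; exact tendsto_const_nhds
    · simp only [hc2]; exact tendsto_const_nhds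
    · simpa only [if_neg (by omega : ¬ n = 2)] using hcum n h)
  have hchar := charFun_tendsto μ hmeas hi hmom
  let ν : ℕ → ProbabilityMeasure ℝ := fun j =>
    ⟨μ.map (η j), Measure.isProbabilityMeasure_map (hmeas j).aemeasurable⟩
  let γ : ProbabilityMeasure ℝ := ⟨gaussianReal 0 1, inferInstance⟩
  have hweak : Tendsto ν atTop (𝓝 γ) := by
    refine ProbabilityMeasure.tendsto_of_tendsto_charFun fun t => ?_
    simp only [charFun_apply_real]
    refine (hchar t).congr fun j => ?_
    exact (integral_map (hmeas j).aemeasurable (by fun_prop :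
      Continuous fun x : ℝ => Complex.exp (t * x * Complex.I)).aestronglyMeasurable).symm
  refine (ProbabilityMeasure.tendsto_iff_forall_integral_tendsto.1 hweak g).congr fun j => ?_
  exact integral_map (hmeas j).aemeasurable g.continuous.aestronglyMeasurable
end
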